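/- arXiv:2512.17000 — 2 statements merged into one kernel-verified Lean document; each statement's English description precedes it below -/
import Mathlib

section
/- Let N > 1 be an odd integer and let q be a primitive N-th root of unity in ℂ. Suppose Δ : 𝒪_q(B⁺) → 𝒪_q(B⁺) ⊗_ℂ 𝒪_q(B⁺) and ε : 𝒪_q(B⁺) → ℂ are algebra homomorphisms with Δ(z_{ij}) = Σ_{k=i}^{j} z_{ik} ⊗ z_{kj} and ε(z_{ij}) = δ_{ij} for all i ≤ j. Define γ_{ij} := (1+q)^N/2 if n is odd and i < n₀ < j, and γ_{ij} := 1 otherwise, and set Y_{ij} := γ_{ij} · z_{ij}^N. Then Δ(Y_{ij}) = Σ_{k=i}^{j} Y_{ik} ⊗ Y_{kj} and ε(Y_{ij}) = δ_{ij} for all 1 ≤ i ≤ j ≤ n. (This is the coalgebra-map part of the theorem stating that X_{ij} ↦ γ_{ij} z_{ij}^N defines the dual quantum Frobenius inclusion 𝒪(B⁺) → 𝒪_q(B⁺) for types B and D.) -/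
noncomputable section
open scoped TensorProduct

namespace SOq

/-- `pr n k = n + 1 - k`, the "primed" index `k'`. -/
def pr (n k : ℕ) : ℕ := n + 1 - k

/-- `2 ρ_i` as an integer. -/
def twoRho (n i : ℕ) : ℤ :=
  if 2 * i < n + 1 then (n : ℤ) - 2 * i
  else if 2 * i = n + 1 then 0
  else (n : ℤ) + 2 - 2 * i

/-- Entries of the matrix `J`: `c_{ij} = δ_{j,i'} q^{-ρ_i}` (with `q^{1/2} := v`). -/
def Jc (n : ℕ) (v : ℂ) (i j : ℕ) : ℂ :=
  if j = pr n i then v ^ (-(twoRho n i)) else 0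

/-- R-matrix coefficients `R^{ij}_{ab}`. -/
def Rc (n : ℕ) (q v : ℂ) (i j a b : ℕ) : ℂ :=
  q ^ (((if i = j then 1 else 0) - (if i = pr n j then 1 else 0) : ℤ)) *
      (if i = a then (1 : ℂ) else 0) * (if j = b then (1 : ℂ) else 0) +
    (if a < i then (1 : ℂ) else 0) * (q - q⁻¹) *
      ((if j = a then (1 : ℂ) else 0) * (if i = b then (1 : ℂ) else 0) -
        Jc n v j i * Jc n v a b)

/-- The free algebra on the generators `z_{ij}`. -/
abbrev FA : Type := FreeAlgebra ℂ (ℕ × ℕ)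

def zf (i j : ℕ) : FA := FreeAlgebra.ι ℂ (i, j)

/-- The FRT relation element `FRT(i,b,j,a)`. -/
def frtRel (n : ℕ) (q v : ℂ) (i b j a : ℕ) : FA :=
  ∑ k ∈ Finset.Icc 1 n, ∑ l ∈ Finset.Icc 1 n,
    (Rc n q v l k a b • (zf i k * zf j l) - Rc n q v j i k l • (zf k a * zf l b))

/-- Entry `(i,j)` of `z J zᵗ J⁻¹ - Id` (note `J⁻¹ = J`). -/
def orthRel₁ (n : ℕ) (v : ℂ) (i j : ℕ) : FA :=
  (∑ k ∈ Finset.Icc 1 n, ∑ l ∈ Finset.Icc 1 n, ∑ m ∈ Finset.Icc 1 n,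
      (Jc n v k l * Jc n v m j) • (zf i k * zf m l)) - (if i = j then (1 : FA) else 0)

/-- Entry `(i,j)` of `J zᵗ J⁻¹ z - Id`. -/
def orthRel₂ (n : ℕ) (v : ℂ) (i j : ℕ) : FA :=
  (∑ k ∈ Finset.Icc 1 n, ∑ l ∈ Finset.Icc 1 n, ∑ m ∈ Finset.Icc 1 n,
      (Jc n v i k * Jc n v l m) • (zf l k * zf m j)) - (if i = j then (1 : FA) else 0)

/-- The defining relations of the quantum Borel algebra `𝒪_q(B⁺) ⊆ 𝒪_q(SO_n)`. -/
inductive Rel (n : ℕ) (q v : ℂ) : FA → FA → Prop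
  | frt : ∀ i b j a : ℕ, i ∈ Finset.Icc 1 n → b ∈ Finset.Icc 1 n → j ∈ Finset.Icc 1 n →
      a ∈ Finset.Icc 1 n → Rel n q v (frtRel n q v i b j a) 0
  | orth₁ : ∀ i j : ℕ, i ∈ Finset.Icc 1 n → j ∈ Finset.Icc 1 n →
      Rel n q v (orthRel₁ n v i j) 0
  | orth₂ : ∀ i j : ℕ, i ∈ Finset.Icc 1 n → j ∈ Finset.Icc 1 n →
      Rel n q v (orthRel₂ n v i j) 0
  | lower : ∀ i j : ℕ, j < i → Rel n q v (zf i j) 0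
  | out : ∀ i j : ℕ, (i = 0 ∨ j = 0 ∨ n < i ∨ n < j) → Rel n q v (zf i j) 0

/-- The quantum Borel algebra `𝒪_q(B⁺)`. -/
abbrev OB (n : ℕ) (q v : ℂ) : Type := RingQuot (Rel n q v)

/-- The generators `z_{ij}` of `𝒪_q(B⁺)`. -/
def z (n : ℕ) (q v : ℂ) (i j : ℕ) : OB n q v :=
  RingQuot.mkAlgHom ℂ (Rel n q v) (zf i j)

end SOq

namespace SOq

/-- The coefficient `γ_{ij}`. -/
def gam (n N : ℕ) (q : ℂ) (i j : ℕ) : ℂ :=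
  if Odd n ∧ 2 * i < n + 1 ∧ n + 1 < 2 * j then (1 + q) ^ N / 2 else 1

/-!
`Δ(z_{ij})^N` is the `N`-th power of the sum of the elements `z_{ik} ⊗ z_{kj}`. A row or column off
the middle is an isotropic vector: entries `x_k`, `x_l` with `l ≠ k'` `q`-commute, and the relation
between `x_k` and `x_{k'}` is corrected by partial sums of the quadratic form. Peeling off the pairs
`k, k'` from the outside in, the power of the pairing of two such vectors becomes a discrete
`q`-Hermite polynomial in the remaining inner sum, with parameter a multiple of the product of the
two partial forms. The inner Gaussian binomials of order `N` vanish, so each step only splits off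
two `N`-th powers. In the middle, where both partial forms are squares up to a factor, the last
`q`-Hermite polynomial is `2 / (1 + q) ^ N` times an `N`-th power, which `γ` compensates.

The entries of a middle row or column do not `q`-commute, but their commutators satisfy cubic
relations which still make the successive summands fulfil the hypotheses of the `q`-binomial theorem
with a `q`-commutator as correction term.
-/

section QCommute

variable {R A : Type*} [CommSemiring R] [Semiring A] [Algebra R A]

/-- `a` and `b` `s`-commute: `a b = s b a`. -/
def QCommute (s : R) (a b : A) : Prop := a * b = s • (b * a)

namespace QCommute

variable {s t : R} {a b c d : A}

lemma eq (h : QCommute s a b) : a * b = s • (b * a) := h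

lemma of_commute (h : Commute a b) : QCommute (1 : R) a b := by rw [QCommute, h.eq, one_smul]

lemma zero_left (b : A) : QCommute s 0 b := by simp [QCommute]

lemma zero_right (a : A) : QCommute s a 0 := by simp [QCommute]

lemma smul_left (h : QCommute s a b) (r : R) : QCommute s (r • a) b := by
  rw [QCommute, smul_mul_assoc, h.eq, mul_smul_comm, smul_comm]

lemma smul_right (h : QCommute s a b) (r : R) : QCommute s a (r • b) := by
  rw [QCommute, smul_mul_assoc, mul_smul_comm, h.eq, smul_comm]

lemma mul_left (ha : QCommute s a c) (hb : QCommute t b c) : QCommute (s * t) (a * b) c := by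
  rw [QCommute, mul_assoc, hb.eq, mul_smul_comm, ← mul_assoc, ha.eq, smul_mul_assoc, smul_smul,
    mul_assoc, mul_comm s]

lemma mul_right (hb : QCommute s a b) (hc : QCommute t a c) : QCommute (s * t) a (b * c) := by
  rw [QCommute, ← mul_assoc, hb.eq, smul_mul_assoc, mul_assoc, hc.eq, mul_smul_comm, smul_smul,
    mul_assoc]

lemma mul_mul (hac : QCommute s a c) (hbd : QCommute t b d) (hbc : Commute b c)
    (had : Commute a d) : QCommute (s * t) (a * b) (c * d) := by
  rw [QCommute, hbc.mul_mul_mul_comm, hac.eq, hbd.eq, smul_mul_smul_comm,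
    had.symm.mul_mul_mul_comm]

lemma sum_left {ι : Type*} {I : Finset ι} {f : ι → A} (h : ∀ i ∈ I, QCommute s (f i) b) :
    QCommute s (∑ i ∈ I, f i) b := by
  rw [QCommute, Finset.sum_mul, Finset.mul_sum, Finset.smul_sum]
  exact Finset.sum_congr rfl h

lemma sum_right {ι : Type*} {I : Finset ι} {f : ι → A} (h : ∀ i ∈ I, QCommute s a (f i)) :
    QCommute s a (∑ i ∈ I, f i) := by
  rw [QCommute, Finset.sum_mul, Finset.mul_sum, Finset.smul_sum]
  exact Finset.sum_congr rfl h

end QCommute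

end QCommute

section GaussianBinomial

open Finset

section Semiring

variable {R : Type*} [CommSemiring R]

/-- The `q`-integer `[m]_p = 1 + p + ⋯ + p ^ (m - 1)`. -/
def qInt (p : R) (m : ℕ) : R := ∑ i ∈ range m, p ^ i

/-- The Gaussian binomial coefficient `[i + j choose i]_p`, defined by the `p`-Pascal rule. It is
indexed by the two parts `i`, `j` so that sums over it run over an antidiagonal. -/
def gaussBinom (p : R) : ℕ → ℕ → R
  | 0, _ => 1
  | _ + 1, 0 => 1
  | i + 1, j + 1 => gaussBinom p i (j + 1) + p ^ (i + 1) * gaussBinom p (i + 1) j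

variable (p : R)

@[simp] lemma qInt_zero : qInt p 0 = 0 := sum_range_zero _

@[simp] lemma qInt_one : qInt p 1 = 1 := by simp [qInt]

lemma qInt_succ (m : ℕ) : qInt p (m + 1) = qInt p m + p ^ m := sum_range_succ _ _

lemma qInt_add (a b : ℕ) : qInt p (a + b) = qInt p a + p ^ a * qInt p b := by
  simp only [qInt, sum_range_add, pow_add, mul_sum]

@[simp] lemma gaussBinom_zero_left (j : ℕ) : gaussBinom p 0 j = 1 := by rw [gaussBinom]

@[simp] lemma gaussBinom_zero_right (i : ℕ) : gaussBinom p i 0 = 1 := by cases i <;> rw [gaussBinom]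

variable {M : Type*} [AddCommMonoid M] [Module R M]

lemma sum_gaussBinom_succ (F : ℕ → ℕ → M) (m : ℕ) :
    ∑ x ∈ antidiagonal (m + 1), gaussBinom p x.1 x.2 • F x.1 x.2 =
      ∑ x ∈ antidiagonal m,
        gaussBinom p x.1 x.2 • (F (x.1 + 1) x.2 + p ^ x.1 • F x.1 (x.2 + 1)) := by
  simp only [smul_add, sum_add_distrib]
  cases m with
  | zero => simp [Nat.antidiagonal_succ, add_comm]
  | succ m =>
    rw [Nat.sum_antidiagonal_succ, Nat.sum_antidiagonal_succ',
      Nat.sum_antidiagonal_succ' (n := m), Nat.sum_antidiagonal_succ (n := m)]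
    simp only [gaussBinom, add_smul, sum_add_distrib, mul_comm (p ^ _), mul_smul,
      gaussBinom_zero_right, pow_zero, one_smul]
    abel

end Semiring

variable {R : Type*} [CommRing R] (p : R)

lemma qInt_mul_sub_one (m : ℕ) : qInt p m * (p - 1) = p ^ m - 1 := geom_sum_mul p m

lemma qInt_mul_gaussBinom (i j : ℕ) :
    qInt p (i + j + 1) * gaussBinom p i j = gaussBinom p (i + 1) j * qInt p (i + 1) ∧
    qInt p (i + j + 1) * gaussBinom p i j = gaussBinom p i (j + 1) * qInt p (j + 1) := by
  induction hs : i + j generalizing i j with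
  | zero =>
    obtain ⟨rfl, rfl⟩ : i = 0 ∧ j = 0 := by omega
    simp
  | succ s ih =>
    constructor
    · cases j with
      | zero => simp [← hs]
      | succ j =>
        obtain ⟨h₁, h₂⟩ := ih i j (by omega)
        rw [gaussBinom, show s + 1 + 1 = (i + 1) + (j + 1) by omega, qInt_add]
        linear_combination p ^ (i + 1) * (h₁ - h₂)
    · cases i with
      | zero => simp [← hs]
      | succ i =>
        obtain ⟨h₁, h₂⟩ := ih i j (by omega)
        rw [gaussBinom, show s + 1 + 1 = (i + 1) + (j + 1) by omega, qInt_add]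
        linear_combination h₂ - h₁

lemma gaussBinom_eq_zero [IsDomain R] {p : R} {N i j : ℕ} (hp : IsPrimitiveRoot p N)
    (hi : i ≠ 0) (hj : j ≠ 0) (hij : i + j = N) : gaussBinom p i j = 0 := by
  obtain ⟨i, rfl⟩ := Nat.exists_eq_succ_of_ne_zero hi
  have h := (qInt_mul_gaussBinom p i j).1
  have hN : qInt p N = 0 := hp.geom_sum_eq_zero (by omega)
  rw [show i + j + 1 = N by omega, hN, zero_mul] at h
  refine (mul_eq_zero.mp h.symm).resolve_right fun h0 ↦ ?_
  refine hp.pow_ne_one_of_pos_of_lt i.succ_ne_zero (by omega) (sub_eq_zero.mp ?_)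
  rw [← qInt_mul_sub_one, h0, zero_mul]

variable {M : Type*} [AddCommGroup M] [Module R M]

lemma sum_gaussBinom_smul_qInt_fst (F : ℕ → ℕ → M) (m : ℕ) :
    ∑ x ∈ antidiagonal (m + 1), gaussBinom p x.1 x.2 • qInt p x.1 • F (x.1 - 1) x.2 =
      qInt p (m + 1) • ∑ x ∈ antidiagonal m, gaussBinom p x.1 x.2 • F x.1 x.2 := by
  rw [Nat.sum_antidiagonal_succ, qInt_zero, zero_smul, smul_zero, zero_add, smul_sum]
  refine sum_congr rfl fun x hx ↦ ?_
  rw [← mem_antidiagonal.mp hx, smul_smul, smul_smul, (qInt_mul_gaussBinom p x.1 x.2).1,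
    Nat.add_sub_cancel]

lemma sum_gaussBinom_smul_qInt_snd (F : ℕ → ℕ → M) (m : ℕ) :
    ∑ x ∈ antidiagonal (m + 1), gaussBinom p x.1 x.2 • qInt p x.2 • F x.1 (x.2 - 1) =
      qInt p (m + 1) • ∑ x ∈ antidiagonal m, gaussBinom p x.1 x.2 • F x.1 x.2 := by
  rw [Nat.sum_antidiagonal_succ', qInt_zero, zero_smul, smul_zero, zero_add, smul_sum]
  refine sum_congr rfl fun x hx ↦ ?_
  rw [← mem_antidiagonal.mp hx, smul_smul, smul_smul, (qInt_mul_gaussBinom p x.1 x.2).2,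
    Nat.add_sub_cancel]

lemma sum_gaussBinom_of_isPrimitiveRoot [IsDomain R] {p : R} {N : ℕ} (hN : N ≠ 0)
    (hp : IsPrimitiveRoot p N) (F : ℕ → ℕ → M) :
    ∑ x ∈ antidiagonal N, gaussBinom p x.1 x.2 • F x.1 x.2 = F 0 N + F N 0 := by
  have hsub : {(0, N), (N, 0)} ⊆ antidiagonal N := by simp [insert_subset_iff]
  rw [← sum_subset hsub, sum_pair (by simp [hN])]
  · simp
  · rintro ⟨i, j⟩ hij hends
    simp only [HasAntidiagonal.mem_antidiagonal, mem_insert, mem_singleton, Prod.mk.injEq,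
      not_or] at hij hends
    rw [gaussBinom_eq_zero hp (by omega) (by omega) hij, zero_smul]

end GaussianBinomial

section QHermite

open Finset

variable {R A : Type*} [CommRing R] [Ring A] [Algebra R A]

/-- The noncommutative discrete `q`-Hermite polynomials `H_m(w, b)`, given by
`H_{m+1} = w H_m + [m]_p b H_{m-1}`. They interpolate between `w ^ m` (for `b = 0`) and expressions
in which the `p`-commutator `b` of two summands of `w` is absorbed. -/
def qHermite (p : R) (w b : A) : ℕ → A
  | 0 => 1
  | 1 => w
  | m + 2 => w * qHermite p w b (m + 1) + qInt p (m + 1) • (b * qHermite p w b m)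

variable (p : R)

@[simp] lemma qHermite_zero (w b : A) : qHermite p w b 0 = 1 := by rw [qHermite]

lemma qHermite_succ (w b : A) (m : ℕ) :
    qHermite p w b (m + 1) = w * qHermite p w b m + qInt p m • (b * qHermite p w b (m - 1)) := by
  cases m <;> simp [qHermite]

lemma qHermite_zero_right (w : A) (m : ℕ) : qHermite p w 0 m = w ^ m := by
  induction m with
  | zero => simp
  | succ m ih => simp [qHermite_succ, ih, pow_succ']

lemma qHermite_zero_left_of_odd (b : A) {m : ℕ} (hm : Odd m) : qHermite p 0 b m = 0 := by
  obtain ⟨k, rfl⟩ := hm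
  induction k with
  | zero => simp [qHermite]
  | succ k ih => rw [show 2 * (k + 1) + 1 = 2 * k + 1 + 2 by ring, qHermite, ih]; simp

variable {p}

lemma QCommute.qHermite_right {u w b : A} (hw : QCommute p u w) (hb : QCommute (p ^ 2) u b)
    (m : ℕ) : QCommute (p ^ m) u (qHermite p w b m) := by
  unfold QCommute
  induction m using Nat.twoStepInduction with
  | zero => simp
  | one => simp [qHermite, hw.eq]
  | more m ih₀ ih₁ =>
    rw [qHermite, mul_add, mul_smul_comm, ← mul_assoc, ← mul_assoc, hw.eq, hb.eq, smul_mul_assoc,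
      smul_mul_assoc, mul_assoc, mul_assoc, ih₀, ih₁]
    simp only [mul_smul_comm, add_mul, smul_mul_assoc, mul_assoc]
    module

lemma mul_pow_of_qCommutator {e f b₀ b₁ : A} (hef : e * f = p • (f * e) + b₁ - b₀)
    (h₁ : QCommute (p ^ 2) b₁ f) (h₀ : Commute b₀ f) (i : ℕ) :
    e * f ^ i = p ^ i • (f ^ i * e) +
      qInt p i • (p ^ (i - 1) • (f ^ (i - 1) * b₁) - b₀ * f ^ (i - 1)) := by
  induction i with
  | zero => simp
  | succ i ih =>
    cases i with
    | zero => simp [hef, add_sub_assoc]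
    | succ i =>
      have hq : p ^ (i + 1) + p ^ i * qInt p (i + 1) * p ^ 2 =
          p ^ (i + 1) * (qInt p (i + 1) + p ^ (i + 1)) := by
        linear_combination p ^ (i + 1) * qInt_mul_sub_one p (i + 1)
      rw [pow_succ f (i + 1), ← mul_assoc, ih, qInt_succ p (i + 1)]
      simp only [Nat.add_sub_cancel, add_mul, sub_mul, smul_mul_assoc, mul_assoc, hef, h₁.eq,
        mul_add, mul_sub, mul_smul_comm]
      simp only [← mul_assoc, ← pow_succ, (h₀.pow_right _).eq]
      linear_combination (norm := module) hq • (f ^ (i + 1) * b₁)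

/-- Splitting off the last summand `f` trades the term `b₀` for `b₁`. -/
theorem qHermite_add_right {e f b₀ b₁ : A} (hef : e * f = p • (f * e) + b₁ - b₀)
    (h₁ : QCommute (p ^ 2) b₁ f) (h₀ : Commute b₀ f) (m : ℕ) :
    qHermite p (e + f) b₀ m =
      ∑ x ∈ antidiagonal m, gaussBinom p x.1 x.2 • (f ^ x.1 * qHermite p e b₁ x.2) := by
  induction m using Nat.twoStepInduction with
  | zero => simp
  | one => simp [qHermite, Nat.antidiagonal_succ]
  | more m ih₀ ih₁ =>
    set H := qHermite p e b₁
    have hfst := sum_gaussBinom_smul_qInt_fst p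
      (fun i j ↦ p ^ i • (f ^ i * (b₁ * H j)) - b₀ * (f ^ i * H j)) m
    have hsnd := sum_gaussBinom_smul_qInt_snd p (fun i j ↦ p ^ i • (f ^ i * (b₁ * H j))) m
    have he (i j : ℕ) : e * (f ^ i * H j) = p ^ i • (f ^ i * (e * H j)) +
        qInt p i • (p ^ (i - 1) • (f ^ (i - 1) * (b₁ * H j)) - b₀ * (f ^ (i - 1) * H j)) := by
      rw [← mul_assoc, mul_pow_of_qCommutator hef h₁ h₀]
      simp only [add_mul, sub_mul, smul_mul_assoc, mul_assoc]
    have hH (i j : ℕ) : p ^ i • (f ^ i * H (j + 1)) = p ^ i • (f ^ i * (e * H j)) +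
        qInt p j • p ^ i • (f ^ i * (b₁ * H (j - 1))) := by
      simp only [H, qHermite_succ, mul_add, mul_smul_comm, smul_add, smul_comm (qInt p j)]
    rw [qHermite, ih₀, ih₁, sum_gaussBinom_succ p (fun i j ↦ f ^ i * H j) (m + 1)]
    simp only [add_mul, mul_sum, mul_smul_comm, he, hH, smul_add, sum_add_distrib, hfst, hsnd,
      pow_succ', mul_assoc]
    simp only [smul_sub, sum_sub_distrib]
    abel

theorem qHermite_add_left {u w b : A} (hw : QCommute p u w) (hb : QCommute (p ^ 2) u b) (m : ℕ) :
    qHermite p (u + w) b m =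
      ∑ x ∈ antidiagonal m, gaussBinom p x.1 x.2 • (qHermite p w b x.1 * u ^ x.2) := by
  induction m using Nat.twoStepInduction with
  | zero => simp
  | one => simp [qHermite, Nat.antidiagonal_succ]
  | more m ih₀ ih₁ =>
    set H := qHermite p w b
    have hfst := sum_gaussBinom_smul_qInt_fst p (fun i j ↦ b * (H i * u ^ j)) m
    have hH (i j : ℕ) : H (i + 1) * u ^ j =
        w * (H i * u ^ j) + qInt p i • (b * (H (i - 1) * u ^ j)) := by
      simp only [H, qHermite_succ, add_mul, smul_mul_assoc, mul_assoc]
    have hu (i j : ℕ) : u * (H i * u ^ j) = p ^ i • (H i * u ^ (j + 1)) := by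
      rw [← mul_assoc, (hw.qHermite_right hb i).eq, smul_mul_assoc, mul_assoc, pow_succ']
    rw [qHermite, ih₀, ih₁, sum_gaussBinom_succ p (fun i j ↦ H i * u ^ j) (m + 1)]
    simp only [add_mul, mul_sum, mul_smul_comm, hH, hu, smul_add, sum_add_distrib, hfst]
    abel

variable [IsDomain R] {N : ℕ}

theorem qHermite_add_add_of_isPrimitiveRoot (hN : N ≠ 0) (hp : IsPrimitiveRoot p N)
    {u w f b₀ b₁ : A} (huf : u * f = p • (f * u) + b₁ - b₀) (hwf : QCommute p w f)
    (huw : QCommute p u w) (hb₁f : QCommute (p ^ 2) b₁ f)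
    (hub₁ : QCommute (p ^ 2) u b₁) (hb₀f : Commute b₀ f) :
    qHermite p (u + w + f) b₀ N = u ^ N + qHermite p w b₁ N + f ^ N := by
  have huwf : (u + w) * f = p • (f * (u + w)) + b₁ - b₀ := by
    rw [add_mul, huf, hwf.eq, mul_add, smul_add]; abel
  rw [qHermite_add_right huwf hb₁f hb₀f,
    sum_gaussBinom_of_isPrimitiveRoot hN hp (fun i j ↦ f ^ i * qHermite p (u + w) b₁ j),
    qHermite_add_left huw hub₁,
    sum_gaussBinom_of_isPrimitiveRoot hN hp (fun i j ↦ qHermite p w b₁ i * u ^ j)]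
  simp

theorem add_pow_of_qCommutator (hN : Odd N) (hp : IsPrimitiveRoot p N) {e f b : A}
    (hef : e * f = p • (f * e) + b) (hbf : QCommute (p ^ 2) b f)
    (heb : QCommute (p ^ 2) e b) : (e + f) ^ N = e ^ N + f ^ N := by
  have h := qHermite_add_add_of_isPrimitiveRoot hN.pos.ne' hp (w := 0) (b₀ := 0)
    (by rwa [sub_zero]) (.zero_left f) (.zero_right e) hbf heb (Commute.zero_left f)
  simpa only [add_zero, qHermite_zero_right, qHermite_zero_left_of_odd p b hN] using h

end QHermite

section MiddleFactor

open Finset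

lemma prod_one_add_pow_of_isPrimitiveRoot {R : Type*} [CommRing R] [IsDomain R] {q : R} {N : ℕ}
    (hN : Odd N) (hq : IsPrimitiveRoot q N) : ∏ i ∈ range N, (1 + q ^ i) = 2 := by
  have hprod := hq.pow_add_pow_eq_prod_add_mul 1 1 hN
  simp only [one_pow, mul_one] at hprod
  rw [← one_add_one_eq_two, hprod]
  have : NeZero N := ⟨hN.pos.ne'⟩
  refine prod_nbij (fun i ↦ q ^ i) (fun i _ ↦ ?_) (fun i hi j hj h ↦ ?_) (fun x hx ↦ ?_)
    (fun _ _ ↦ rfl)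
  · rw [Polynomial.mem_nthRootsFinset hN.pos, pow_right_comm, hq.pow_eq_one, one_pow]
  · exact hq.pow_inj (by simpa using hi) (by simpa using hj) h
  · rw [mem_coe, Polynomial.mem_nthRootsFinset hN.pos] at hx
    obtain ⟨i, hi, rfl⟩ := hq.eq_pow_of_pow_eq_one hx
    exact ⟨i, by simpa using hi, rfl⟩

lemma one_add_ne_zero_of_pow_eq_one {R : Type*} [Ring R] [NeZero (2 : R)] {q : R} {N : ℕ}
    (hN : Odd N) (hq : q ^ N = 1) : 1 + q ≠ 0 := by
  intro h
  rw [eq_neg_of_add_eq_zero_right h, hN.neg_one_pow] at hq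
  apply two_ne_zero (α := R)
  rw [← one_add_one_eq_two, ← neg_add_cancel (1 : R), hq]

variable {K A : Type*} [Field K] [Ring A] [Algebra K A] {q : K}

lemma qHermite_smul_sq (hq : 1 + q ≠ 0) (x : A) (m : ℕ) :
    qHermite (q ^ 2) x (((q ^ 2 - 1) * q / (1 + q) ^ 2) • (x * x)) m =
      ((∏ i ∈ range m, (1 + q ^ (i + 1))) / (1 + q) ^ m) • x ^ m := by
  induction m using Nat.twoStepInduction with
  | zero => simp
  | one => simp [qHermite, hq]
  | more m ih₀ ih₁ =>
    rw [qHermite, ih₀, ih₁]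
    simp only [mul_smul_comm, smul_mul_assoc, smul_smul, mul_assoc, ← pow_succ', ← add_smul]
    congr 1
    rw [prod_range_succ _ (m + 1), prod_range_succ _ m]
    linear_combination (norm := (field_simp; ring))
      (q * (∏ i ∈ range m, (1 + q ^ (i + 1))) / (1 + q) ^ (m + 2)) *
        qInt_mul_sub_one (q ^ 2) (m + 1)

lemma qHermite_smul_sq_of_isPrimitiveRoot {N : ℕ} (hN : Odd N) (hp : IsPrimitiveRoot q N)
    (hq : 1 + q ≠ 0) (x : A) :
    qHermite (q ^ 2) x (((q ^ 2 - 1) * q / (1 + q) ^ 2) • (x * x)) N =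
      (2 / (1 + q) ^ N) • x ^ N := by
  obtain ⟨m, rfl⟩ := Nat.exists_eq_succ_of_ne_zero hN.pos.ne'
  rw [qHermite_smul_sq hq, ← prod_one_add_pow_of_isPrimitiveRoot hN hp, prod_range_succ,
    prod_range_succ', hp.pow_eq_one, pow_zero]

end MiddleFactor

section Weight

variable {n a : ℕ} {q v : ℂ}

/-- The nonzero entry `q ^ (-ρ_a)` of row `a` of `J`. -/
def weight (n : ℕ) (v : ℂ) (a : ℕ) : ℂ := v ^ (-twoRho n a)

lemma weight_ne_zero (hv : v ≠ 0) (n a : ℕ) : weight n v a ≠ 0 := zpow_ne_zero _ hv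

lemma weight_of_lt (v : ℂ) (ha : 2 * a < n + 1) : weight n v a = v ^ (2 * a - n : ℤ) := by
  rw [weight, twoRho, if_pos ha, neg_sub]

lemma weight_of_middle (v : ℂ) (ha : 2 * a = n + 1) : weight n v a = 1 := by
  simp [weight, twoRho, ha]

lemma weight_of_gt (v : ℂ) (ha : n + 1 < 2 * a) : weight n v a = v ^ (2 * a - n - 2 : ℤ) := by
  rw [weight, twoRho, if_neg (by omega), if_neg (by omega)]
  congr 1
  ring

lemma weight_mul_weight_of_lt (hv : v ≠ 0) {b : ℕ} (hab : a + b = n + 1) (ha : a < b) :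
    weight n v a * weight n v b = 1 := by
  rw [weight_of_lt v (by omega), weight_of_gt v (by omega), ← zpow_add₀ hv,
    show (2 * a - n + (2 * b - n - 2) : ℤ) = 0 by omega, zpow_zero]

lemma weight_mul_weight (hv : v ≠ 0) {b : ℕ} (hab : a + b = n + 1) :
    weight n v a * weight n v b = 1 := by
  rcases lt_trichotomy a b with h | rfl | h
  · exact weight_mul_weight_of_lt hv hab h
  · simp [weight_of_middle v (show 2 * a = n + 1 by omega)]
  · rw [mul_comm, weight_mul_weight_of_lt hv (by omega) h]

lemma weight_succ_sq (hv : v ≠ 0) (hvq : v ^ 2 = q) (ha : 2 * (a + 1) ≤ n) :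
    weight n v (a + 1) ^ 2 = q ^ 2 * weight n v a ^ 2 := by
  rw [weight_of_lt v (by omega), weight_of_lt v (by omega), ← mul_pow, ← hvq,
    ← zpow_natCast v 2, ← zpow_add₀ hv]
  congr 2
  push_cast
  ring

lemma weight_sq_mul_of_middle (hv : v ≠ 0) (hvq : v ^ 2 = q) (ha : n = 2 * a + 1) :
    weight n v a ^ 2 * q = 1 := by
  rw [weight_of_lt v (by omega), ← hvq, ← mul_pow, ← zpow_add_one₀ hv,
    show (2 * a - n + 1 : ℤ) = 0 by omega, zpow_zero, one_pow]

end Weight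

section QuantumIsotropic

open Finset

variable {A : Type*} [Ring A] [Algebra ℂ A]

/-- The part `∑_{k' > a} q ^ (-ρ_k) x_k x_{k'}` of the quadratic form with matrix `J`. -/
def partialForm (n : ℕ) (v : ℂ) (x : ℕ → A) (a : ℕ) : A :=
  ∑ k ∈ Icc 1 (n - a), weight n v k • (x k * x (n + 1 - k))

/-- `x_1, …, x_n` satisfy the relations of the coordinate functions of the quantum isotropic cone:
`partialForm n v x 0 = 0` is the equation of the cone. Every row and column of the generating
matrix of `𝒪_q(SO_n)` other than the middle one is of this kind. -/
structure QuantumIsotropic (n : ℕ) (q v : ℂ) (x : ℕ → A) : Prop where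
  qCommute : ∀ k l, 1 ≤ k → k < l → l ≤ n → k + l ≠ n + 1 → QCommute q (x k) (x l)
  mul_prime : ∀ a, 1 ≤ a → 2 * a < n + 1 → x (n + 1 - a) * x a =
    x a * x (n + 1 - a) + ((q ^ 2 - 1) * weight n v a) • partialForm n v x a
  isotropic : partialForm n v x 0 = 0

variable {n : ℕ} {q v : ℂ} {x y : ℕ → A} {a : ℕ}

lemma partialForm_commute {b : A} (h : ∀ k, Commute (x k) b) :
    Commute (partialForm n v x a) b :=
  .sum_left _ _ _ fun k _ ↦ ((h k).mul_left (h _)).smul_left _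

lemma mul_eq_partialForm_sub (hv : v ≠ 0) (ha : 2 * (a + 1) ≤ n) :
    x (n - a) * x (a + 1) =
      weight n v (a + 1) • (partialForm n v x a - partialForm n v x (a + 1)) := by
  rw [partialForm, partialForm, show n - a = n - (a + 1) + 1 by omega,
    sum_Icc_succ_top (by omega), add_sub_cancel_left, smul_smul,
    weight_mul_weight hv (by omega), one_smul, show n + 1 - (n - (a + 1) + 1) = a + 1 by omega]

lemma sum_Icc_eq_add_sum_add {M : Type*} [AddCommMonoid M] (F : ℕ → M) (ha : 2 * (a + 1) ≤ n) :
    ∑ k ∈ Icc (a + 1) (n - a), F k =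
      F (a + 1) + ∑ k ∈ Icc (a + 1 + 1) (n - (a + 1)), F k + F (n - a) := by
  rw [show n - a = n - (a + 1) + 1 by omega, sum_Icc_succ_top (by omega),
    ← add_sum_Ioc_eq_sum_Icc (by omega), ← Icc_succ_left_eq_Ioc]
  rfl

namespace QuantumIsotropic

lemma mul_eq (hx : QuantumIsotropic n q v x) (hv : v ≠ 0) (ha : 2 * (a + 1) ≤ n) :
    x (a + 1) * x (n - a) =
      weight n v (a + 1) • (partialForm n v x a - q ^ 2 • partialForm n v x (a + 1)) := by
  have h := hx.mul_prime (a + 1) (by omega) (by omega)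
  rw [show n + 1 - (a + 1) = n - a by omega, mul_eq_partialForm_sub hv ha,
    ← sub_eq_iff_eq_add] at h
  rw [← h]
  module

lemma commute_partialForm (hx : QuantumIsotropic n q v x) (hv : v ≠ 0) {k : ℕ} (hak : a < k)
    (hk : k + a < n + 1) : Commute (x k) (partialForm n v x a) := by
  induction a with
  | zero => simp [hx.isotropic]
  | succ a ih =>
    by_cases ha : 2 * (a + 1) ≤ n
    · rw [show partialForm n v x (a + 1) = partialForm n v x a -
        (weight n v (a + 1))⁻¹ • (x (n - a) * x (a + 1)) by
          rw [mul_eq_partialForm_sub hv ha, inv_smul_smul₀ (weight_ne_zero hv _ _), sub_sub_cancel]]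
      refine (ih (by omega) (by omega)).sub_right (Commute.smul_right ?_ _)
      rw [Commute, SemiconjBy, ← mul_assoc,
        (hx.qCommute k (n - a) (by omega) (by omega) (by omega) (by omega)).eq, smul_mul_assoc,
        mul_assoc, mul_assoc,
        (hx.qCommute (a + 1) k (by omega) (by omega) (by omega) (by omega)).eq, mul_smul_comm]
    · omega

lemma qCommute_partialForm_right (hx : QuantumIsotropic n q v x) (hv : v ≠ 0)
    (ha : 2 * (a + 1) ≤ n) : QCommute (q ^ 2) (x (a + 1)) (partialForm n v x (a + 1)) := by
  have h := mul_assoc (x (a + 1)) (x (n - a)) (x (a + 1))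
  rw [mul_eq_partialForm_sub hv ha, hx.mul_eq hv ha, mul_smul_comm, smul_mul_assoc] at h
  have hS := smul_right_injective A (weight_ne_zero hv _ _) h
  simp only [mul_sub, sub_mul, (hx.commute_partialForm hv a.lt_succ_self (by omega)).eq,
    smul_mul_assoc] at hS
  exact (sub_right_injective hS).symm

lemma qCommute_partialForm_left (hx : QuantumIsotropic n q v x) (hv : v ≠ 0)
    (ha : 2 * (a + 1) ≤ n) : QCommute (q ^ 2) (partialForm n v x (a + 1)) (x (n - a)) := by
  have h := mul_assoc (x (n - a)) (x (a + 1)) (x (n - a))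
  rw [mul_eq_partialForm_sub hv ha, hx.mul_eq hv ha, mul_smul_comm, smul_mul_assoc] at h
  have hS := smul_right_injective A (weight_ne_zero hv _ _) h
  have hcomm := hx.commute_partialForm hv (k := n - a) (a := a) (by omega) (by omega)
  simp only [mul_sub, sub_mul, hcomm.eq, mul_smul_comm] at hS
  exact sub_right_injective hS

lemma sum_Icc_eq_smul_partialForm (hx : QuantumIsotropic n q v x) (hv : v ≠ 0) (hvq : v ^ 2 = q)
    (ha : 2 * a ≤ n) : ∑ k ∈ Icc (a + 1) (n - a), weight n v k • (x k * x (n + 1 - k)) =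
      (1 + q ^ 2 * weight n v a ^ 2) • partialForm n v x a := by
  induction a with
  | zero => rw [hx.isotropic, smul_zero]; exact hx.isotropic
  | succ a ih =>
    have h := ih (by omega)
    rw [sum_Icc_eq_add_sum_add _ ha, show n + 1 - (a + 1) = n - a by omega,
      show n + 1 - (n - a) = a + 1 by omega, mul_eq_partialForm_sub hv ha, hx.mul_eq hv ha,
      smul_smul, smul_smul, ← sq, weight_mul_weight hv (a := n - a) (by omega),
      ← weight_succ_sq hv hvq ha, ← eq_sub_iff_add_eq, ← eq_sub_iff_add_eq'] at h
    rw [h]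
    module

lemma sq_middle (hx : QuantumIsotropic n q v x) (hv : v ≠ 0) (hvq : v ^ 2 = q)
    (ha : n = 2 * a + 1) : x (a + 1) * x (a + 1) = (1 + q) • partialForm n v x a := by
  have h := hx.sum_Icc_eq_smul_partialForm hv hvq (a := a) (by omega)
  rw [show n - a = a + 1 by omega, Icc_self, sum_singleton, weight_of_middle v (by omega), one_smul,
    show n + 1 - (a + 1) = a + 1 by omega, sq q, mul_assoc, mul_comm q (_ ^ 2),
    weight_sq_mul_of_middle hv hvq ha, mul_one] at h
  exact h

lemma qCommute_mul_mul (hx : QuantumIsotropic n q v x) (hy : QuantumIsotropic n q v y)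
    (hxy : ∀ k l, Commute (x k) (y l)) {k l : ℕ} (hk : 1 ≤ k) (hkl : k < l) (hl : l ≤ n)
    (hkl' : k + l ≠ n + 1) : QCommute (q ^ 2) (x k * y k) (x l * y l) :=
  sq q ▸ (hx.qCommute k l hk hkl hl hkl').mul_mul (hy.qCommute k l hk hkl hl hkl')
    (hxy l k).symm (hxy k l)

/-- The correction term for the middle part `x_{a+1} y_{a+1} + ⋯ + x_{n-a} y_{n-a}` of the pairing
of two commuting isotropic vectors. -/
def pairForm (n : ℕ) (q v : ℂ) (x y : ℕ → A) (a : ℕ) : A :=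
  ((q ^ 2 - 1) * (q ^ 2 * weight n v a ^ 2)) • (partialForm n v x a * partialForm n v y a)

lemma mul_mul_eq_pairForm (hx : QuantumIsotropic n q v x) (hy : QuantumIsotropic n q v y)
    (hxy : ∀ k l, Commute (x k) (y l)) (hv : v ≠ 0) (hvq : v ^ 2 = q) (ha : 2 * (a + 1) ≤ n) :
    x (a + 1) * y (a + 1) * (x (n - a) * y (n - a)) =
      q ^ 2 • (x (n - a) * y (n - a) * (x (a + 1) * y (a + 1))) + pairForm n q v x y (a + 1) -
        pairForm n q v x y a := by
  rw [(hxy _ _).symm.mul_mul_mul_comm, (hxy _ _).symm.mul_mul_mul_comm, hx.mul_eq hv ha,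
    hy.mul_eq hv ha, mul_eq_partialForm_sub hv ha, mul_eq_partialForm_sub hv ha, pairForm,
    pairForm, ← weight_succ_sq hv hvq ha]
  simp only [mul_sub, sub_mul, smul_mul_assoc, mul_smul_comm]
  module

theorem qHermite_sum_mul_step (hx : QuantumIsotropic n q v x) (hy : QuantumIsotropic n q v y)
    (hxy : ∀ k l, Commute (x k) (y l)) (hv : v ≠ 0) (hvq : v ^ 2 = q) {N : ℕ} (hN : N ≠ 0)
    (hp : IsPrimitiveRoot (q ^ 2) N) (ha : 2 * (a + 1) ≤ n) :
    qHermite (q ^ 2) (∑ k ∈ Icc (a + 1) (n - a), x k * y k) (pairForm n q v x y a) N =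
      (x (a + 1) * y (a + 1)) ^ N +
        qHermite (q ^ 2) (∑ k ∈ Icc (a + 1 + 1) (n - (a + 1)), x k * y k)
          (pairForm n q v x y (a + 1)) N +
        (x (n - a) * y (n - a)) ^ N := by
  have hpow : (q ^ 2) ^ 2 = q ^ 2 * q ^ 2 := sq _
  have hcomm (b : ℕ) (k : ℕ) : Commute (partialForm n v x b) (y k) :=
    partialForm_commute fun l ↦ hxy l k
  have hcomm' (b : ℕ) (k : ℕ) : Commute (partialForm n v y b) (x k) :=
    partialForm_commute fun l ↦ (hxy k l).symm
  rw [sum_Icc_eq_add_sum_add _ ha]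
  refine qHermite_add_add_of_isPrimitiveRoot hN hp (mul_mul_eq_pairForm hx hy hxy hv hvq ha)
    (.sum_left fun k hk ↦ ?_) (.sum_right fun k hk ↦ ?_) (.smul_left ?_ _) (.smul_right ?_ _)
    (.smul_left ?_ _)
  · rw [mem_Icc] at hk
    exact qCommute_mul_mul hx hy hxy (by omega) (by omega) (by omega) (by omega)
  · rw [mem_Icc] at hk
    exact qCommute_mul_mul hx hy hxy (by omega) (by omega) (by omega) (by omega)
  · rw [hpow]
    exact (hx.qCommute_partialForm_left hv ha).mul_mul (hy.qCommute_partialForm_left hv ha)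
      (hcomm' _ _) (hcomm _ _)
  · rw [hpow]
    exact (hx.qCommute_partialForm_right hv ha).mul_mul (hy.qCommute_partialForm_right hv ha)
      (hcomm _ _).symm (hcomm' _ _).symm
  · refine .mul_left (.mul_right ?_ (hcomm _ _)) (.mul_right (hcomm' _ _) ?_)
    · exact (hx.commute_partialForm hv (by omega) (by omega)).symm
    · exact (hy.commute_partialForm hv (by omega) (by omega)).symm

theorem qHermite_sum_mul_middle (hx : QuantumIsotropic n q v x) (hy : QuantumIsotropic n q v y)
    (hxy : ∀ k l, Commute (x k) (y l)) (hv : v ≠ 0) (hvq : v ^ 2 = q) {N : ℕ} (hN : Odd N)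
    (hp : IsPrimitiveRoot q N) (ha : n = 2 * a + 1) :
    qHermite (q ^ 2) (x (a + 1) * y (a + 1)) (pairForm n q v x y a) N =
      (2 / (1 + q) ^ N) • (x (a + 1) * y (a + 1)) ^ N := by
  have hq : 1 + q ≠ 0 := one_add_ne_zero_of_pow_eq_one hN hp.pow_eq_one
  rw [← qHermite_smul_sq_of_isPrimitiveRoot hN hp hq, (hxy _ _).symm.mul_mul_mul_comm,
    hx.sq_middle hv hvq ha, hy.sq_middle hv hvq ha, smul_mul_smul_comm, smul_smul, pairForm, sq q,
    mul_assoc q, mul_comm q (weight n v a ^ 2), weight_sq_mul_of_middle hv hvq ha]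
  congr 2
  field_simp

theorem qHermite_sum_mul (hx : QuantumIsotropic n q v x) (hy : QuantumIsotropic n q v y)
    (hxy : ∀ k l, Commute (x k) (y l)) (hv : v ≠ 0) (hvq : v ^ 2 = q) {N : ℕ} (hN : Odd N)
    (hp : IsPrimitiveRoot q N) (d : ℕ) (had : n / 2 = a + d) :
    qHermite (q ^ 2) (∑ k ∈ Icc (a + 1) (n - a), x k * y k) (pairForm n q v x y a) N =
      ∑ k ∈ Icc (a + 1) (n - a),
        (if 2 * k = n + 1 then 2 / (1 + q) ^ N else 1) • (x k * y k) ^ N := by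
  induction d generalizing a with
  | zero =>
    rcases (show n = 2 * a ∨ n = 2 * a + 1 by omega) with ha | ha
    · rw [Icc_eq_empty (by omega), sum_empty, sum_empty, qHermite_zero_left_of_odd _ _ hN]
    · rw [show n - a = a + 1 by omega, Icc_self, sum_singleton, sum_singleton, if_pos (by omega),
        qHermite_sum_mul_middle hx hy hxy hv hvq hN hp ha]
  | succ d ih =>
    have hp' : IsPrimitiveRoot (q ^ 2) N := hp.pow_of_coprime 2 hN.coprime_two_left
    rw [qHermite_sum_mul_step hx hy hxy hv hvq hN.pos.ne' hp' (by omega), ih (by omega),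
      sum_Icc_eq_add_sum_add (a := a) _ (by omega), if_neg (by omega), if_neg (by omega), one_smul,
      one_smul]

theorem sum_mul_pow (hx : QuantumIsotropic n q v x) (hy : QuantumIsotropic n q v y)
    (hxy : ∀ k l, Commute (x k) (y l)) (hv : v ≠ 0) (hvq : v ^ 2 = q) {N : ℕ} (hN : Odd N)
    (hp : IsPrimitiveRoot q N) :
    (∑ k ∈ Icc 1 n, x k * y k) ^ N =
      ∑ k ∈ Icc 1 n, (if 2 * k = n + 1 then 2 / (1 + q) ^ N else 1) • (x k * y k) ^ N := by
  have h := qHermite_sum_mul hx hy hxy hv hvq hN hp (n / 2) (zero_add _).symm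
  rwa [pairForm, hx.isotropic, zero_mul, smul_zero, qHermite_zero_right] at h

end QuantumIsotropic

end QuantumIsotropic

section CubicRelations

variable {ι R A : Type*}

section CommRing

variable [Ring A] {W Y : ι → A}

lemma commute_lie_of_commute (hWY : ∀ a b, Commute (W a) (Y b)) (a b d : ι) :
    Commute ⁅W a, W b⁆ (Y d) := by
  rw [Ring.lie_def]
  exact ((hWY a d).mul_left (hWY b d)).sub_left ((hWY b d).mul_left (hWY a d))

variable [CommRing R] [Algebra R A] {q : R} {a t : ι}

lemma mul_mul_mul_eq_add_lie (hWY : ∀ a b, Commute (W a) (Y b)) (hY : QCommute q (Y a) (Y t)) :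
    W a * Y a * (W t * Y t) =
      q • (W t * Y t * (W a * Y a)) + q • (⁅W a, W t⁆ * (Y t * Y a)) := by
  rw [(hWY t a).symm.mul_mul_mul_comm, (hWY a t).symm.mul_mul_mul_comm, hY.eq, mul_smul_comm,
    Ring.lie_def, sub_mul, ← smul_add, add_sub_cancel]

end CommRing

variable [LinearOrder ι]

lemma QCommute.sum_sum [CommSemiring R] [Semiring A] [Algebra R A] {s : R} {I : Finset ι}
    {f g : ι → A} (hdiag : ∀ a ∈ I, QCommute s (f a) (g a))
    (hpair : ∀ d ∈ I, ∀ a ∈ I, d < a →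
      f d * g a + f a * g d = s • (g a * f d + g d * f a)) :
    QCommute s (∑ a ∈ I, f a) (∑ a ∈ I, g a) := by
  induction I using Finset.induction_on_max with
  | empty => exact zero_left 0
  | insert t I hI ih =>
    have ht : t ∉ I := fun h ↦ lt_irrefl t (hI t h)
    have hsum : QCommute s (∑ a ∈ I, f a) (∑ a ∈ I, g a) :=
      ih (fun a ha ↦ hdiag a (Finset.mem_insert_of_mem ha)) fun d hd a ha ↦
        hpair d (Finset.mem_insert_of_mem hd) a (Finset.mem_insert_of_mem ha)
    have hcross : (∑ a ∈ I, f a) * g t + f t * ∑ a ∈ I, g a =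
        s • (g t * ∑ a ∈ I, f a + (∑ a ∈ I, g a) * f t) := by
      simp only [Finset.sum_mul, Finset.mul_sum, ← Finset.sum_add_distrib, Finset.smul_sum]
      exact Finset.sum_congr rfl fun d hd ↦
        hpair d (Finset.mem_insert_of_mem hd) t (Finset.mem_insert_self t I) (hI d hd)
    rw [QCommute, Finset.sum_insert ht, Finset.sum_insert ht, add_mul, mul_add, mul_add,
      (hdiag t (Finset.mem_insert_self t I)).eq, hsum.eq, add_assoc,
      ← add_assoc (f t * ∑ a ∈ I, g a), add_comm (f t * ∑ a ∈ I, g a), hcross, add_mul, mul_add,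
      mul_add, smul_add, smul_add, smul_add, smul_add]
    abel

variable [Field R] [Ring A] [Algebra R A] {q : R} {s : Finset ι} {W Y : ι → A} {a d t : ι}

/-- Elements `W a`, `a ∈ s`, whose commutators satisfy the cubic relations of the middle row of a
quantum orthogonal matrix (`q`-commutation fails there). -/
structure CubicCommuting (q : R) (s : Finset ι) (W : ι → A) : Prop where
  qCommute_lie : ∀ a ∈ s, ∀ b ∈ s, a < b → QCommute q (W a) ⁅W a, W b⁆
  lie_qCommute : ∀ a ∈ s, ∀ b ∈ s, a < b → QCommute q ⁅W a, W b⁆ (W b)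
  mul_lie : ∀ d ∈ s, ∀ a ∈ s, ∀ b ∈ s, d < a → a < b →
    W d * ⁅W a, W b⁆ = ⁅W a, W b⁆ * W d + (q - q⁻¹) • (W a * ⁅W d, W b⁆)
  commute_lie : ∀ d ∈ s, ∀ a ∈ s, ∀ b ∈ s, d < a → a < b → Commute (W a) ⁅W d, W b⁆

lemma CubicCommuting.mono {s' : Finset ι} (hW : CubicCommuting q s W) (h : s' ⊆ s) :
    CubicCommuting q s' W where
  qCommute_lie a ha b hb := hW.qCommute_lie a (h ha) b (h hb)
  lie_qCommute a ha b hb := hW.lie_qCommute a (h ha) b (h hb)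
  mul_lie d hd a ha b hb := hW.mul_lie d (h hd) a (h ha) b (h hb)
  commute_lie d hd a ha b hb := hW.commute_lie d (h hd) a (h ha) b (h hb)

lemma CubicCommuting.lie_mul_qCommute (hW : CubicCommuting q s W)
    (hWY : ∀ a b, Commute (W a) (Y b)) (ha : a ∈ s) (ht : t ∈ s) (hat : a < t)
    (hY : QCommute q (Y a) (Y t)) :
    QCommute (q ^ 2) (⁅W a, W t⁆ * (Y t * Y a)) (W t * Y t) := by
  have hYt : QCommute (1 * q) (Y t * Y a) (Y t) := .mul_left (.of_commute (.refl _)) hY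
  rw [sq]
  nth_rw 2 [← one_mul q]
  exact (hW.lie_qCommute a ha t ht hat).mul_mul hYt ((hWY t t).mul_right (hWY t a)).symm
    (commute_lie_of_commute hWY a t t)

lemma CubicCommuting.qCommute_lie_mul (hW : CubicCommuting q s W)
    (hWY : ∀ a b, Commute (W a) (Y b)) (ha : a ∈ s) (ht : t ∈ s) (hat : a < t)
    (hY : QCommute q (Y a) (Y t)) :
    QCommute (q ^ 2) (W a * Y a) (⁅W a, W t⁆ * (Y t * Y a)) := by
  have hYa : QCommute (q * 1) (Y a) (Y t * Y a) := .mul_right hY (.of_commute (.refl _))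
  rw [sq]
  nth_rw 2 [← mul_one q]
  exact (hW.qCommute_lie a ha t ht hat).mul_mul hYa (commute_lie_of_commute hWY a t a).symm
    ((hWY a t).mul_right (hWY a a))

lemma CubicCommuting.mul_lie_mul_add (hW : CubicCommuting q s W) (hq : q ≠ 0)
    (hWY : ∀ a b, Commute (W a) (Y b))
    (hY : ∀ a ∈ s, ∀ b ∈ s, a < b → QCommute q (Y a) (Y b))
    (hd : d ∈ s) (ha : a ∈ s) (ht : t ∈ s) (hda : d < a) (hat : a < t) :
    W d * Y d * (⁅W a, W t⁆ * (Y t * Y a)) + W a * Y a * (⁅W d, W t⁆ * (Y t * Y d)) =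
      q ^ 2 • (⁅W a, W t⁆ * (Y t * Y a) * (W d * Y d) +
        ⁅W d, W t⁆ * (Y t * Y d) * (W a * Y a)) := by
  have hleft (k l : ι) : W k * Y k * (⁅W l, W t⁆ * (Y t * Y l)) =
      W k * ⁅W l, W t⁆ * (Y k * (Y t * Y l)) :=
    (commute_lie_of_commute hWY l t k).symm.mul_mul_mul_comm _ _
  have hright (k l : ι) : ⁅W l, W t⁆ * (Y t * Y l) * (W k * Y k) =
      ⁅W l, W t⁆ * W k * (Y t * (Y l * Y k)) := by
    rw [((hWY k t).mul_right (hWY k l)).symm.mul_mul_mul_comm, mul_assoc (Y t)]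
  have hdta : Y d * (Y t * Y a) = q ^ 2 • (Y t * (Y a * Y d)) := by
    rw [← mul_assoc, (hY d hd t ht (hda.trans hat)).eq, smul_mul_assoc, mul_assoc,
      (hY d hd a ha hda).eq, mul_smul_comm, smul_smul, sq]
  have hatd : Y a * (Y t * Y d) = q • (Y t * (Y a * Y d)) := by
    rw [← mul_assoc, (hY a ha t ht hat).eq, smul_mul_assoc, mul_assoc]
  rw [hleft, hleft, hright, hright, hdta, hatd, (hY d hd a ha hda).eq,
    hW.mul_lie d hd a ha t ht hda hat, ← (hW.commute_lie d hd a ha t ht hda hat).eq]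
  have hq2 : q ^ 2 * (q - q⁻¹) = q ^ 3 - q := by field_simp
  simp only [add_mul, smul_mul_assoc, mul_smul_comm, smul_add, smul_smul, hq2]
  module

theorem CubicCommuting.sum_mul_pow {N : ℕ} (hN : Odd N) (hq : IsPrimitiveRoot q N)
    (hW : CubicCommuting q s W) (hWY : ∀ a b, Commute (W a) (Y b))
    (hY : ∀ a ∈ s, ∀ b ∈ s, a < b → QCommute q (Y a) (Y b)) :
    (∑ k ∈ s, W k * Y k) ^ N = ∑ k ∈ s, (W k * Y k) ^ N := by
  induction s using Finset.induction_on_max with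
  | empty => simp [hN.pos.ne']
  | insert t I hI ih =>
    have ht : t ∉ I := fun h ↦ lt_irrefl t (hI t h)
    have htI : t ∈ insert t I := Finset.mem_insert_self t I
    have hmem {a} (ha : a ∈ I) : a ∈ insert t I := Finset.mem_insert_of_mem ha
    have hYt {a} (ha : a ∈ I) : QCommute q (Y a) (Y t) := hY a (hmem ha) t htI (hI a ha)
    rw [Finset.sum_insert ht, Finset.sum_insert ht,
      ← ih (hW.mono (Finset.subset_insert t I)) fun a ha b hb ↦ hY a (hmem ha) b (hmem hb),
      add_comm, add_comm ((W t * Y t) ^ N)]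
    refine add_pow_of_qCommutator hN hq (b := q • ∑ a ∈ I, ⁅W a, W t⁆ * (Y t * Y a)) ?_ ?_ ?_
    · simp only [Finset.sum_mul, Finset.mul_sum, Finset.smul_sum, ← Finset.sum_add_distrib]
      exact Finset.sum_congr rfl fun a ha ↦ mul_mul_mul_eq_add_lie hWY (hYt ha)
    · exact .smul_left (.sum_left fun a ha ↦
        hW.lie_mul_qCommute hWY (hmem ha) htI (hI a ha) (hYt ha)) q
    · exact .smul_right (.sum_sum
        (fun a ha ↦ hW.qCommute_lie_mul hWY (hmem ha) htI (hI a ha) (hYt ha))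
        fun d hd a ha hda ↦ hW.mul_lie_mul_add (hq.ne_zero hN.pos.ne') hWY hY (hmem hd) (hmem ha)
          htI hda (hI a ha)) q

end CubicRelations

section QuantumOrthogonal

open Finset

lemma Rc_eq (n : ℕ) (q v : ℂ) (i j a b : ℕ) :
    Rc n q v i j a b =
      (if i = a ∧ j = b then
        q ^ ((if i = j then 1 else 0) - (if i = pr n j then 1 else 0) : ℤ) else 0) +
      (if a < i then q - q⁻¹ else 0) *
        ((if j = a ∧ i = b then 1 else 0) - Jc n v j i * Jc n v a b) := by
  rw [Rc, mul_assoc (q ^ _), ite_zero_mul_ite_zero, ite_zero_mul_ite_zero, mul_ite_zero, mul_one,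
    mul_one, ite_mul, zero_mul, one_mul]

lemma Rc_swap (n : ℕ) (q v : ℂ) {i j a b : ℕ} (hi : i ∈ Icc 1 n) (hj : j ∈ Icc 1 n)
    (ha : a ∈ Icc 1 n) (hb : b ∈ Icc 1 n) : Rc n q v i j a b = Rc n q v b a j i := by
  rw [mem_Icc] at hi hj ha hb
  rw [Rc_eq, Rc_eq, mul_comm (Jc n v j i)]
  congr 1
  · by_cases h : i = a ∧ j = b
    · obtain ⟨rfl, rfl⟩ := h
      simp only [eq_comm, show i = pr n j ↔ j = pr n i by unfold pr; omega]
    · rw [if_neg h, if_neg (by tauto)]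
  · by_cases h : a < i ↔ j < b
    · simp only [h, eq_comm]
    · have hJ : Jc n v a b * Jc n v j i = 0 := by
        unfold Jc pr
        rw [ite_zero_mul_ite_zero, if_neg (by omega)]
      rw [hJ, if_neg (show ¬(j = a ∧ i = b) by omega), if_neg (show ¬(a = j ∧ b = i) by omega),
        sub_zero, mul_zero, mul_zero]

variable {A : Type*} [Ring A] [Algebra ℂ A] {n : ℕ} {q v : ℂ}

/-- The contraction `∑_{k,l} R^{lk}_{ab} f_{kl}` of a family `f` with the `R`-matrix. -/
def rContract (n : ℕ) (q v : ℂ) (f : ℕ → ℕ → A) (a b : ℕ) : A :=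
  ∑ k ∈ Icc 1 n, ∑ l ∈ Icc 1 n, Rc n q v l k a b • f k l

lemma Jc_prime (n : ℕ) (v : ℂ) (a : ℕ) : Jc n v a (n + 1 - a) = weight n v a := if_pos rfl

lemma Jc_eq_zero {a b : ℕ} (ha : a ≤ n) (hab : a + b ≠ n + 1) : Jc n v a b = 0 :=
  if_neg (by unfold pr; omega)

lemma sum_sum_Jc_smul (f : ℕ → ℕ → A) :
    ∑ k ∈ Icc 1 n, ∑ l ∈ Icc 1 n, Jc n v k l • f k l =
      ∑ k ∈ Icc 1 n, weight n v k • f k (n + 1 - k) := by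
  refine sum_congr rfl fun k hk ↦ ?_
  rw [mem_Icc] at hk
  rw [sum_eq_single_of_mem (n + 1 - k) (mem_Icc.mpr (by omega)) fun l _ hl ↦ by
    rw [Jc_eq_zero (by omega) (by omega), zero_smul], Jc_prime]

lemma rContract_eq (f : ℕ → ℕ → A) {a b : ℕ} (ha : a ∈ Icc 1 n) (hb : b ∈ Icc 1 n) :
    rContract n q v f a b =
      q ^ ((if a = b then 1 else 0) - (if a = pr n b then 1 else 0) : ℤ) • f b a +
        (if a < b then q - q⁻¹ else 0) • f a b -
        ((q - q⁻¹) * Jc n v a b) • ∑ k ∈ Icc 1 (n - a), weight n v k • f k (n + 1 - k) := by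
  have hsingle {c d : ℕ} (hc : c ∈ Icc 1 n) (hd : d ∈ Icc 1 n) (g : ℕ → ℕ → ℂ) :
      ∑ k ∈ Icc 1 n, ∑ l ∈ Icc 1 n, (if k = c ∧ l = d then g k l else 0) • f k l =
        g c d • f c d := by
    rw [sum_eq_single_of_mem c hc fun k _ hk ↦ sum_eq_zero fun l _ ↦ by simp [hk],
      sum_eq_single_of_mem d hd fun l _ hl ↦ by simp [hl], if_pos ⟨rfl, rfl⟩]
  have hform : ∑ k ∈ Icc 1 (n - a), weight n v k • f k (n + 1 - k) =
      ∑ k ∈ Icc 1 n, ∑ l ∈ Icc 1 n, (if a < l then Jc n v k l else 0) • f k l := by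
    simp only [ite_smul, zero_smul, ← smul_ite_zero (M := ℂ), sum_sum_Jc_smul]
    refine sum_subset_zero_on_sdiff (Icc_subset_Icc_right (Nat.sub_le n a)) ?_ ?_ <;>
      intro k hk
    · simp only [mem_sdiff, mem_Icc] at hk
      rw [if_neg (by omega), smul_zero]
    · rw [mem_Icc] at hk
      rw [if_pos (by omega)]
  rw [hform, ← hsingle hb ha fun k l ↦
      q ^ ((if l = k then 1 else 0) - (if l = pr n k then 1 else 0) : ℤ),
    ← hsingle ha hb fun k l ↦ if k < l then q - q⁻¹ else 0, rContract]
  simp only [smul_sum, ← sum_add_distrib, ← sum_sub_distrib, smul_smul, ← add_smul, ← sub_smul]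
  refine sum_congr rfl fun k _ ↦ sum_congr rfl fun l _ ↦ ?_
  simp only [Rc_eq, @and_comm (l = a) (k = b), mul_sub, ← add_sub_assoc]
  congr 2
  · congr 1
    by_cases h : k = a ∧ l = b
    · simp only [h, and_self, if_true, mul_one]
    · simp only [h, if_false, mul_zero]
  · split_ifs <;> ring

lemma rContract_of_lt (f : ℕ → ℕ → A) {a b : ℕ} (ha : 1 ≤ a) (hab : a < b) (hb : b ≤ n)
    (h : a + b ≠ n + 1) :
    rContract n q v f a b = f b a + (q - q⁻¹) • f a b := by
  rw [rContract_eq f (mem_Icc.mpr (by omega)) (mem_Icc.mpr (by omega)), if_neg hab.ne,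
    if_neg (show a ≠ pr n b by unfold pr; omega), if_pos hab, Jc_eq_zero (by omega) h, sub_zero,
    zpow_zero, one_smul, mul_zero, zero_smul, sub_zero]

lemma rContract_of_gt (f : ℕ → ℕ → A) {a b : ℕ} (hb : 1 ≤ b) (hab : b < a) (ha : a ≤ n)
    (h : a + b ≠ n + 1) :
    rContract n q v f a b = f b a := by
  rw [rContract_eq f (mem_Icc.mpr (by omega)) (mem_Icc.mpr (by omega)), if_neg hab.ne',
    if_neg (show a ≠ pr n b by unfold pr; omega), if_neg hab.asymm, Jc_eq_zero (by omega) h,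
    sub_zero, zpow_zero, one_smul, zero_smul, add_zero, mul_zero, zero_smul, sub_zero]

lemma rContract_self (f : ℕ → ℕ → A) {a : ℕ} (ha : a ∈ Icc 1 n) (h : 2 * a ≠ n + 1) :
    rContract n q v f a a = q • f a a := by
  rw [rContract_eq f ha ha, if_pos rfl, if_neg (show a ≠ pr n a by unfold pr; omega),
    if_neg (lt_irrefl a), Jc_eq_zero (mem_Icc.mp ha).2 (by omega), sub_zero, zpow_one, zero_smul,
    add_zero, mul_zero, zero_smul, sub_zero]

lemma rContract_middle (f : ℕ → ℕ → A) {r : ℕ} (hr : 2 * r = n + 1) :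
    rContract n q v f r r =
      f r r - (q - q⁻¹) • ∑ k ∈ Icc 1 (n - r), weight n v k • f k (n + 1 - k) := by
  have hmem : r ∈ Icc 1 n := mem_Icc.mpr (by omega)
  have hJ : Jc n v r r = 1 := by
    rw [← weight_of_middle v hr, ← Jc_prime, show n + 1 - r = r by omega]
  rw [rContract_eq f hmem hmem, if_pos rfl, if_pos (show r = pr n r by unfold pr; omega),
    if_neg (lt_irrefl r), hJ, sub_self, zpow_zero, one_smul, zero_smul, add_zero, mul_one]

lemma rContract_prime (f : ℕ → ℕ → A) {a : ℕ} (ha : 1 ≤ a) (h : 2 * a < n + 1) :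
    rContract n q v f a (n + 1 - a) =
      q⁻¹ • f (n + 1 - a) a + (q - q⁻¹) • f a (n + 1 - a) -
        ((q - q⁻¹) * weight n v a) • ∑ k ∈ Icc 1 (n - a), weight n v k • f k (n + 1 - k) := by
  rw [rContract_eq f (mem_Icc.mpr (by omega)) (mem_Icc.mpr (by omega)),
    if_neg (show a ≠ n + 1 - a by omega), if_pos (show a = pr n (n + 1 - a) by unfold pr; omega),
    if_pos (show a < n + 1 - a by omega), Jc_prime, zero_sub, zpow_neg_one]

/-- The relations of the generating matrix of `𝒪_q(SO_n)`: the `RTT` relations, and the isotropy of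
all rows and columns but the middle ones, which is contained in the orthogonality relations. Both
are kept in a form that is invariant under transposition. -/
structure QuantumOrthogonal (n : ℕ) (q v : ℂ) (Z : ℕ → ℕ → A) : Prop where
  rContract_eq : ∀ i ∈ Icc 1 n, ∀ j ∈ Icc 1 n, ∀ a ∈ Icc 1 n, ∀ b ∈ Icc 1 n,
    rContract n q v (fun k l ↦ Z i k * Z j l) a b = rContract n q v (fun k l ↦ Z k a * Z l b) i j
  row_isotropic : ∀ i ∈ Icc 1 n, 2 * i ≠ n + 1 → partialForm n v (Z i) 0 = 0
  col_isotropic : ∀ j ∈ Icc 1 n, 2 * j ≠ n + 1 → partialForm n v (fun k ↦ Z k j) 0 = 0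

namespace QuantumOrthogonal

variable {Z : ℕ → ℕ → A} {i j a b d r : ℕ}

lemma transpose (hZ : QuantumOrthogonal n q v Z) : QuantumOrthogonal n q v fun i j ↦ Z j i where
  rContract_eq i hi j hj a ha b hb := (hZ.rContract_eq a ha b hb i hi j hj).symm
  row_isotropic := hZ.col_isotropic
  col_isotropic := hZ.row_isotropic

lemma map {B : Type*} [Ring B] [Algebra ℂ B] (f : A →ₐ[ℂ] B) (hZ : QuantumOrthogonal n q v Z) :
    QuantumOrthogonal n q v fun i j ↦ f (Z i j) where
  rContract_eq i hi j hj a ha b hb := by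
    simpa only [rContract, map_sum, map_smul, map_mul] using
      congrArg f (hZ.rContract_eq i hi j hj a ha b hb)
  row_isotropic i hi h := by
    simpa only [partialForm, map_sum, map_smul, map_mul, map_zero] using
      congrArg f (hZ.row_isotropic i hi h)
  col_isotropic j hj h := by
    simpa only [partialForm, map_sum, map_smul, map_mul, map_zero] using
      congrArg f (hZ.col_isotropic j hj h)

lemma commute_of_lt_of_lt (hZ : QuantumOrthogonal n q v Z) (hi : 1 ≤ i) (hij : i < j) (hj : j ≤ n)
    (hij' : i + j ≠ n + 1) (ha : 1 ≤ a) (hab : a < b) (hb : b ≤ n) (hab' : a + b ≠ n + 1) :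
    Commute (Z i b) (Z j a) := by
  have h := hZ.rContract_eq i (mem_Icc.mpr (by omega)) j (mem_Icc.mpr (by omega)) a
    (mem_Icc.mpr (by omega)) b (mem_Icc.mpr (by omega))
  rw [rContract_of_lt _ ha hab hb hab', rContract_of_lt _ hi hij hj hij'] at h
  exact add_right_cancel h

lemma mul_of_lt_of_lt (hZ : QuantumOrthogonal n q v Z) (hi : 1 ≤ i) (hij : i < j) (hj : j ≤ n)
    (hij' : i + j ≠ n + 1) (ha : 1 ≤ a) (hab : a < b) (hb : b ≤ n) (hab' : a + b ≠ n + 1) :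
    Z i a * Z j b = Z j b * Z i a + (q - q⁻¹) • (Z i b * Z j a) := by
  have h := hZ.rContract_eq i (mem_Icc.mpr (by omega)) j (mem_Icc.mpr (by omega)) b
    (mem_Icc.mpr (by omega)) a (mem_Icc.mpr (by omega))
  rwa [rContract_of_gt _ ha hab hb (by omega), rContract_of_lt _ hi hij hj hij'] at h

lemma quantumIsotropic_row (hZ : QuantumOrthogonal n q v Z) (hq : q ≠ 0) (hi : i ∈ Icc 1 n)
    (h : 2 * i ≠ n + 1) : QuantumIsotropic n q v (Z i) where
  qCommute k l hk hkl hl hkl' := by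
    have hR := hZ.rContract_eq i hi i hi k (mem_Icc.mpr (by omega)) l (mem_Icc.mpr (by omega))
    rw [rContract_of_lt _ hk hkl hl hkl', rContract_self _ hi h, ← eq_sub_iff_add_eq,
      ← sub_smul, sub_sub_cancel] at hR
    rw [QCommute, hR, smul_inv_smul₀ hq]
  mul_prime a ha ha' := by
    have hR := hZ.rContract_eq i hi i hi a (mem_Icc.mpr (by omega)) (n + 1 - a)
      (mem_Icc.mpr (by omega))
    rw [rContract_prime _ ha ha', rContract_self _ hi h, sub_eq_iff_eq_add,
      ← eq_sub_iff_add_eq, inv_smul_eq_iff₀ hq] at hR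
    rw [hR, partialForm]
    have hq2 : q ^ 2 - 1 = q * (q - q⁻¹) := by field_simp
    rw [hq2]
    match_scalars
    · field_simp
      ring
    · field_simp
  isotropic := hZ.row_isotropic i hi h

lemma quantumIsotropic_col (hZ : QuantumOrthogonal n q v Z) (hq : q ≠ 0) (hj : j ∈ Icc 1 n)
    (h : 2 * j ≠ n + 1) : QuantumIsotropic n q v fun k ↦ Z k j :=
  hZ.transpose.quantumIsotropic_row hq hj h

lemma lie_middle (hZ : QuantumOrthogonal n q v Z) (hr : 2 * r = n + 1) (ha : 1 ≤ a) (hab : a < b)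
    (hb : b ≤ n) (hab' : a + b ≠ n + 1) :
    ⁅Z r a, Z r b⁆ =
      ∑ k ∈ Icc 1 (n - r), -((q - q⁻¹) * weight n v k) • (Z k b * Z (n + 1 - k) a) := by
  have hmem : r ∈ Icc 1 n := mem_Icc.mpr (by omega)
  have h := hZ.rContract_eq r hmem r hmem b (mem_Icc.mpr (by omega)) a (mem_Icc.mpr (by omega))
  rw [rContract_of_gt _ ha hab hb (by omega), rContract_middle _ hr] at h
  rw [Ring.lie_def, h, sub_sub_cancel_left, smul_sum, ← sum_neg_distrib]
  simp only [neg_smul, mul_smul]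

lemma qCommute_middle_mul (hZ : QuantumOrthogonal n q v Z) (hq : q ≠ 0) (hr : 2 * r = n + 1)
    (hi : 1 ≤ i) (hir : i < r) (hrj : r < j) (hj : j ≤ n) (ha : 1 ≤ a) (hab : a < b) (hb : b ≤ n)
    (hab' : a + b ≠ n + 1) (har : a ≠ r) : QCommute q (Z r a) (Z i b * Z j a) := by
  rw [← one_mul q]
  refine .mul_right (.of_commute ?_) ?_
  · exact (hZ.commute_of_lt_of_lt hi hir (by omega) (by omega) ha hab hb hab').symm
  · exact (hZ.quantumIsotropic_col hq (mem_Icc.mpr (by omega)) (by omega)).qCommute r j (by omega)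
      hrj hj (by omega)

lemma mul_qCommute_middle (hZ : QuantumOrthogonal n q v Z) (hq : q ≠ 0) (hr : 2 * r = n + 1)
    (hi : 1 ≤ i) (hir : i < r) (hrj : r < j) (hj : j ≤ n) (ha : 1 ≤ a) (hab : a < b) (hb : b ≤ n)
    (hab' : a + b ≠ n + 1) (hbr : b ≠ r) : QCommute q (Z i b * Z j a) (Z r b) := by
  rw [← mul_one q]
  refine .mul_left ?_ (.of_commute ?_)
  · exact (hZ.quantumIsotropic_col hq (mem_Icc.mpr (by omega)) (by omega)).qCommute i r hi hir
      (by omega) (by omega)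
  · exact (hZ.commute_of_lt_of_lt (by omega) hrj hj (by omega) ha hab hb hab').symm

lemma commute_middle_mul (hZ : QuantumOrthogonal n q v Z) (hr : 2 * r = n + 1)
    (hi : 1 ≤ i) (hir : i < r) (hrj : r < j) (hj : j ≤ n) (hd : 1 ≤ d) (hda : d < a) (hab : a < b)
    (hb : b ≤ n) (hda' : d + a ≠ n + 1) (hab' : a + b ≠ n + 1) :
    Commute (Z r a) (Z i b * Z j d) :=
  (hZ.commute_of_lt_of_lt hi hir (by omega) (by omega) (by omega) hab hb hab').symm.mul_right
    (hZ.commute_of_lt_of_lt (by omega) hrj hj (by omega) hd hda (by omega) hda')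

lemma middle_mul_mul (hZ : QuantumOrthogonal n q v Z) (hr : 2 * r = n + 1)
    (hi : 1 ≤ i) (hir : i < r) (hrj : r < j) (hj : j ≤ n) (hd : 1 ≤ d) (hda : d < a) (hab : a < b)
    (hb : b ≤ n) (hda' : d + a ≠ n + 1) (hdb' : d + b ≠ n + 1) (hab' : a + b ≠ n + 1) :
    Z r d * (Z i b * Z j a) =
      Z i b * Z j a * Z r d + (q - q⁻¹) • (Z r a * (Z i b * Z j d)) := by
  have hrd : Commute (Z i b) (Z r d) :=
    hZ.commute_of_lt_of_lt hi hir (by omega) (by omega) hd (by omega) hb hdb'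
  have hra : Commute (Z i b) (Z r a) :=
    hZ.commute_of_lt_of_lt hi hir (by omega) (by omega) (by omega) hab hb hab'
  rw [← mul_assoc, ← hrd.eq, mul_assoc,
    hZ.mul_of_lt_of_lt (by omega) hrj hj (by omega) hd hda (by omega) hda', mul_add,
    mul_smul_comm, ← mul_assoc, ← mul_assoc, hra.eq, mul_assoc (Z r a)]

theorem cubicCommuting_middle (hZ : QuantumOrthogonal n q v Z) (hq : q ≠ 0) (hr : 2 * r = n + 1)
    {s : Finset ℕ} (hs : s ⊆ Icc 1 n) (hne : ∀ a ∈ s, ∀ b ∈ s, a < b → a + b ≠ n + 1)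
    (hzero : ∀ a ∈ s, ∀ b ∈ s, a < b → a = r ∨ b = r → ∀ k < r, Z k b * Z (n + 1 - k) a = 0) :
    CubicCommuting q s (Z r) := by
  have hbound {a} (ha : a ∈ s) : 1 ≤ a ∧ a ≤ n := mem_Icc.mp (hs ha)
  have hlie {a b} (ha : a ∈ s) (hb : b ∈ s) (hab : a < b) :=
    hZ.lie_middle hr (hbound ha).1 hab (hbound hb).2 (hne a ha b hb hab)
  have hk {k} (hk : k ∈ Icc 1 (n - r)) : 1 ≤ k ∧ k < r ∧ r < n + 1 - k ∧ n + 1 - k ≤ n := by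
    rw [mem_Icc] at hk; omega
  refine ⟨fun a ha b hb hab ↦ ?_, fun a ha b hb hab ↦ ?_, fun d hd a ha b hb hda hab ↦ ?_,
    fun d hd a ha b hb hda hab ↦ ?_⟩
  · rw [hlie ha hb hab]
    refine .sum_right fun k hk' ↦ .smul_right ?_ _
    obtain ⟨h₁, h₂, h₃, h₄⟩ := hk hk'
    by_cases har : a = r
    · rw [hzero a ha b hb hab (.inl har) k h₂]
      exact .zero_right _
    · exact hZ.qCommute_middle_mul hq hr h₁ h₂ h₃ h₄ (hbound ha).1 hab (hbound hb).2
        (hne a ha b hb hab) har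
  · rw [hlie ha hb hab]
    refine .sum_left fun k hk' ↦ .smul_left ?_ _
    obtain ⟨h₁, h₂, h₃, h₄⟩ := hk hk'
    by_cases hbr : b = r
    · rw [hzero a ha b hb hab (.inr hbr) k h₂]
      exact .zero_left _
    · exact hZ.mul_qCommute_middle hq hr h₁ h₂ h₃ h₄ (hbound ha).1 hab (hbound hb).2
        (hne a ha b hb hab) hbr
  · rw [hlie ha hb hab, hlie hd hb (hda.trans hab), mul_sum, sum_mul, mul_sum, smul_sum,
      ← sum_add_distrib]
    refine sum_congr rfl fun k hk' ↦ ?_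
    obtain ⟨h₁, h₂, h₃, h₄⟩ := hk hk'
    rw [mul_smul_comm, smul_mul_assoc, mul_smul_comm, smul_comm (q - q⁻¹), ← smul_add,
      hZ.middle_mul_mul hr h₁ h₂ h₃ h₄ (hbound hd).1 hda hab (hbound hb).2 (hne d hd a ha hda)
        (hne d hd b hb (hda.trans hab)) (hne a ha b hb hab)]
  · rw [hlie hd hb (hda.trans hab)]
    refine .sum_right _ _ _ fun k hk' ↦ .smul_right ?_ _
    obtain ⟨h₁, h₂, h₃, h₄⟩ := hk hk'
    exact hZ.commute_middle_mul hr h₁ h₂ h₃ h₄ (hbound hd).1 hda hab (hbound hb).2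
      (hne d hd a ha hda) (hne a ha b hb hab)

end QuantumOrthogonal

end QuantumOrthogonal

section Generators

open Finset

variable {n : ℕ} {q v : ℂ}

lemma orthogonality_row {A : Type*} [Ring A] [Algebra ℂ A] (Z : ℕ → ℕ → A) {i : ℕ}
    (hi : i ∈ Icc 1 n) :
    ∑ k ∈ Icc 1 n, ∑ l ∈ Icc 1 n, ∑ m ∈ Icc 1 n,
        (Jc n v k l * Jc n v m (n + 1 - i)) • (Z i k * Z m l) =
      weight n v i • partialForm n v (Z i) 0 := by
  have hi' := mem_Icc.mp hi
  rw [partialForm, Nat.sub_zero, ← sum_sum_Jc_smul fun k l ↦ Z i k * Z i l]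
  simp only [smul_sum, smul_smul]
  refine sum_congr rfl fun k _ ↦ sum_congr rfl fun l _ ↦ ?_
  rw [sum_eq_single_of_mem i hi fun m hm hmi ↦ ?_, Jc_prime, mul_comm]
  rw [Jc_eq_zero (mem_Icc.mp hm).2 (by omega), mul_zero, zero_smul]

lemma orthogonality_col {A : Type*} [Ring A] [Algebra ℂ A] (Z : ℕ → ℕ → A) {j : ℕ}
    (hj : j ∈ Icc 1 n) :
    ∑ k ∈ Icc 1 n, ∑ l ∈ Icc 1 n, ∑ m ∈ Icc 1 n,
        (Jc n v (n + 1 - j) k * Jc n v l m) • (Z l k * Z m j) =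
      weight n v (n + 1 - j) • partialForm n v (fun k ↦ Z k j) 0 := by
  have hj' := mem_Icc.mp hj
  have hJ : Jc n v (n + 1 - j) j = weight n v (n + 1 - j) := by
    rw [← Jc_prime, show n + 1 - (n + 1 - j) = j by omega]
  rw [sum_eq_single_of_mem j hj fun m _ hmj ↦ by
    simp only [Jc_eq_zero (show n + 1 - j ≤ n by omega) (show n + 1 - j + m ≠ n + 1 by omega),
      zero_mul, zero_smul, sum_const_zero], hJ]
  simp only [mul_smul, ← smul_sum]
  rw [sum_sum_Jc_smul fun l m ↦ Z l j * Z m j, partialForm, Nat.sub_zero]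

lemma z_eq_zero_of_lt {i j : ℕ} (h : j < i) : z n q v i j = 0 := by
  rw [z, RingQuot.mkAlgHom_rel ℂ (Rel.lower i j h), map_zero]

lemma rContract_z {i j a b : ℕ} (hi : i ∈ Icc 1 n) (hj : j ∈ Icc 1 n) (ha : a ∈ Icc 1 n)
    (hb : b ∈ Icc 1 n) :
    rContract n q v (fun k l ↦ z n q v i k * z n q v j l) a b =
      rContract n q v (fun k l ↦ z n q v k a * z n q v l b) i j := by
  have h := RingQuot.mkAlgHom_rel ℂ (Rel.frt (q := q) (v := v) i b j a hi hb hj ha)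
  simp only [frtRel, map_sum, map_sub, map_smul, map_mul, map_zero, sum_sub_distrib,
    sub_eq_zero] at h
  refine h.trans (sum_congr rfl fun k hk ↦ sum_congr rfl fun l hl ↦ ?_)
  rw [Rc_swap n q v hj hi hk hl]
  rfl

lemma partialForm_z_row (hv : v ≠ 0) {i : ℕ} (hi : i ∈ Icc 1 n) (h : 2 * i ≠ n + 1) :
    partialForm n v (z n q v i) 0 = 0 := by
  have hi' := mem_Icc.mp hi
  have horth := RingQuot.mkAlgHom_rel ℂ
    (Rel.orth₁ (q := q) (v := v) i (n + 1 - i) hi (mem_Icc.mpr (by omega)))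
  simp only [orthRel₁, if_neg (show i ≠ n + 1 - i by omega), sub_zero, map_sum, map_smul, map_mul,
    map_zero] at horth
  exact (smul_eq_zero.mp ((orthogonality_row (z n q v) hi).symm.trans horth)).resolve_left
    (weight_ne_zero hv n i)

lemma partialForm_z_col (hv : v ≠ 0) {j : ℕ} (hj : j ∈ Icc 1 n) (h : 2 * j ≠ n + 1) :
    partialForm n v (fun k ↦ z n q v k j) 0 = 0 := by
  have hj' := mem_Icc.mp hj
  have horth := RingQuot.mkAlgHom_rel ℂ
    (Rel.orth₂ (q := q) (v := v) (n + 1 - j) j (mem_Icc.mpr (by omega)) hj)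
  simp only [orthRel₂, if_neg (show n + 1 - j ≠ j by omega), sub_zero, map_sum, map_smul, map_mul,
    map_zero] at horth
  exact (smul_eq_zero.mp ((orthogonality_col (z n q v) hj).symm.trans horth)).resolve_left
    (weight_ne_zero hv n _)

theorem quantumOrthogonal_z (hv : v ≠ 0) : QuantumOrthogonal n q v (z n q v) where
  rContract_eq _ hi _ hj _ ha _ hb := rContract_z hi hj ha hb
  row_isotropic _ := partialForm_z_row hv
  col_isotropic _ := partialForm_z_col hv

end Generators

section FrobeniusPower

open Finset

variable {A : Type*} [Ring A] [Algebra ℂ A] {n N i j k r : ℕ} {q v : ℂ} {Z X : ℕ → ℕ → A}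

theorem QuantumOrthogonal.sum_middle_row_mul_pow (hZ : QuantumOrthogonal n q v Z)
    (hlow : ∀ i j, j < i → Z i j = 0) (hN : Odd N) (hq : IsPrimitiveRoot q N) (hr : 2 * r = n + 1)
    {y : ℕ → A} (hy : QuantumIsotropic n q v y) (hZy : ∀ k l, Commute (Z r k) (y l)) (hj : j ≤ n) :
    (∑ k ∈ Icc r j, Z r k * y k) ^ N = ∑ k ∈ Icc r j, (Z r k * y k) ^ N := by
  refine (hZ.cubicCommuting_middle (hq.ne_zero hN.pos.ne') hr
    (Icc_subset_Icc (by omega) hj) ?_ ?_).sum_mul_pow hN hq hZy ?_ <;>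
    simp only [mem_Icc]
  · intro a ha b _ hab
    omega
  · intro a ha b _ hab har k hk
    rw [hlow (n + 1 - k) a (by omega), mul_zero]
  · intro a ha b hb hab
    exact hy.qCommute a b (by omega) hab (by omega) (by omega)

theorem QuantumOrthogonal.sum_mul_middle_col_pow (hX : QuantumOrthogonal n q v X)
    (hlow : ∀ i j, j < i → X i j = 0) (hN : Odd N) (hq : IsPrimitiveRoot q N) (hr : 2 * r = n + 1)
    {x : ℕ → A} (hx : QuantumIsotropic n q v x) (hxX : ∀ k l, Commute (x k) (X l r)) (hi : 1 ≤ i) :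
    (∑ k ∈ Icc i r, x k * X k r) ^ N = ∑ k ∈ Icc i r, (x k * X k r) ^ N := by
  simp only [(hxX _ _).eq]
  refine (hX.transpose.cubicCommuting_middle (hq.ne_zero hN.pos.ne') hr
    (Icc_subset_Icc hi (by omega)) ?_ ?_).sum_mul_pow hN hq (fun k l ↦ (hxX l k).symm) ?_ <;>
    simp only [mem_Icc]
  · intro a _ b hb hab
    omega
  · intro a _ b hb hab hbr k hk
    rw [hlow b k (by omega), zero_mul]
  · intro a ha b hb hab
    exact hx.qCommute a b (by omega) hab (by omega) (by omega)

theorem QuantumOrthogonal.sum_row_mul_col_pow (hZ : QuantumOrthogonal n q v Z)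
    (hX : QuantumOrthogonal n q v X) (hZlow : ∀ i j, j < i → Z i j = 0)
    (hXlow : ∀ i j, j < i → X i j = 0) (hZX : ∀ i k l j, Commute (Z i k) (X l j))
    (hv : v ^ 2 = q) (hN : Odd N) (hq : IsPrimitiveRoot q N) (hi : i ∈ Icc 1 n) (hj : j ∈ Icc 1 n)
    (hi' : 2 * i ≠ n + 1) (hj' : 2 * j ≠ n + 1) :
    (∑ k ∈ Icc i j, Z i k * X k j) ^ N =
      ∑ k ∈ Icc i j, (if 2 * k = n + 1 then 2 / (1 + q) ^ N else 1 : ℂ) • (Z i k * X k j) ^ N := by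
  have hq₀ : q ≠ 0 := hq.ne_zero hN.pos.ne'
  have hv₀ : v ≠ 0 := fun h ↦ hq₀ (by rw [← hv, h, zero_pow two_ne_zero])
  have hsub : Icc i j ⊆ Icc 1 n := Icc_subset_Icc (mem_Icc.mp hi).1 (mem_Icc.mp hj).2
  have hzero (k) (hk : k ∉ Icc i j) : Z i k * X k j = 0 := by
    rw [mem_Icc, not_and_or, not_le, not_le] at hk
    rcases hk with hk | hk
    · rw [hZlow i k hk, zero_mul]
    · rw [hXlow k j hk, mul_zero]
  rw [sum_subset hsub fun k _ ↦ hzero k,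
    sum_subset hsub fun k _ hk ↦ by rw [hzero k hk, zero_pow hN.pos.ne', smul_zero]]
  exact (hZ.quantumIsotropic_row hq₀ hi hi').sum_mul_pow (hX.quantumIsotropic_col hq₀ hj hj')
    (fun k l ↦ hZX i k l j) hv₀ hv hN hq

lemma gam_eq_one (h : n + 1 ≤ 2 * i ∨ 2 * j ≤ n + 1) : gam n N q i j = 1 :=
  if_neg (by omega)

lemma gam_mul_gam (hq : 1 + q ≠ 0) (hi : 2 * i ≠ n + 1) (hj : 2 * j ≠ n + 1) (hik : i ≤ k)
    (hkj : k ≤ j) :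
    gam n N q i k * gam n N q k j =
      gam n N q i j * if 2 * k = n + 1 then 2 / (1 + q) ^ N else 1 := by
  by_cases hn : Odd n ∧ 2 * i < n + 1 ∧ n + 1 < 2 * j
  · have hij : gam n N q i j = (1 + q) ^ N / 2 := if_pos hn
    rcases lt_trichotomy (2 * k) (n + 1) with hk | hk | hk
    · rw [gam_eq_one (.inr hk.le), if_neg hk.ne, one_mul, mul_one, hij, gam,
        if_pos ⟨hn.1, hk, hn.2.2⟩]
    · rw [gam_eq_one (.inr hk.le), gam_eq_one (.inl hk.ge), if_pos hk, hij]
      field_simp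
    · rw [gam_eq_one (.inl hk.le), if_neg hk.ne', mul_one, mul_one, hij, gam,
        if_pos ⟨hn.1, hn.2.1, hk⟩]
  · rw [Nat.odd_iff] at hn
    simp only [gam, Nat.odd_iff]
    rw [if_neg (by omega), if_neg (by omega), if_neg (by omega), if_neg (by omega)]

theorem QuantumOrthogonal.gam_smul_sum_mul_pow (hZ : QuantumOrthogonal n q v Z)
    (hX : QuantumOrthogonal n q v X) (hZlow : ∀ i j, j < i → Z i j = 0)
    (hXlow : ∀ i j, j < i → X i j = 0) (hZX : ∀ i k l j, Commute (Z i k) (X l j))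
    (hv : v ^ 2 = q) (hN : Odd N) (hq : IsPrimitiveRoot q N) (hi : 1 ≤ i) (hij : i ≤ j)
    (hj : j ≤ n) :
    gam n N q i j • (∑ k ∈ Icc i j, Z i k * X k j) ^ N =
      ∑ k ∈ Icc i j, (gam n N q i k * gam n N q k j) • (Z i k * X k j) ^ N := by
  have hmem {k} (hk : i ≤ k) (hk' : k ≤ j) : k ∈ Icc 1 n := mem_Icc.mpr (by omega)
  have hq₀ : q ≠ 0 := hq.ne_zero hN.pos.ne'
  rcases hij.eq_or_lt with rfl | hlt
  · rw [Icc_self, sum_singleton, sum_singleton, gam_eq_one (by omega), one_mul]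
  by_cases hi' : 2 * i = n + 1
  · rw [hZ.sum_middle_row_mul_pow hZlow hN hq hi'
      (hX.quantumIsotropic_col hq₀ (hmem hij le_rfl) (by omega)) (fun k l ↦ hZX i k l j) hj,
      gam_eq_one (.inl hi'.ge), one_smul]
    refine sum_congr rfl fun k hk ↦ ?_
    rw [mem_Icc] at hk
    rw [gam_eq_one (by omega), gam_eq_one (by omega), one_mul, one_smul]
  by_cases hj' : 2 * j = n + 1
  · rw [hX.sum_mul_middle_col_pow hXlow hN hq hj'
      (hZ.quantumIsotropic_row hq₀ (hmem le_rfl hij) hi') (fun k l ↦ hZX i k l j) hi,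
      gam_eq_one (.inr hj'.le), one_smul]
    refine sum_congr rfl fun k hk ↦ ?_
    rw [mem_Icc] at hk
    rw [gam_eq_one (by omega), gam_eq_one (by omega), one_mul, one_smul]
  · rw [hZ.sum_row_mul_col_pow hX hZlow hXlow hZX hv hN hq (hmem le_rfl hij) (hmem hij le_rfl)
      hi' hj', smul_sum]
    refine sum_congr rfl fun k hk ↦ ?_
    rw [mem_Icc] at hk
    rw [smul_smul, gam_mul_gam (one_add_ne_zero_of_pow_eq_one hN hq.pow_eq_one) hi' hj' hk.1 hk.2]

end FrobeniusPower

/-- The elements `Y_{ij} = γ_{ij} z_{ij}^N` satisfy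
`Δ(Y_{ij}) = ∑_{k=i}^{j} Y_{ik} ⊗ Y_{kj}` and `ε(Y_{ij}) = δ_{ij}`:
the coalgebra-map part of the dual quantum Frobenius inclusion `𝒪(B⁺) → 𝒪_q(B⁺)`. -/
theorem frobenius_coalgebra_map (n : ℕ) (hn : 3 ≤ n) (N : ℕ) (hN1 : 1 < N) (hNodd : Odd N)
    (q v : ℂ) (hv : v ^ 2 = q) (hq : IsPrimitiveRoot q N)
    (Δ : OB n q v →ₐ[ℂ] (OB n q v ⊗[ℂ] OB n q v))
    (ε : OB n q v →ₐ[ℂ] ℂ)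
    (hΔ : ∀ i j : ℕ, 1 ≤ i → i ≤ j → j ≤ n →
      Δ (z n q v i j) = ∑ k ∈ Finset.Icc i j, z n q v i k ⊗ₜ[ℂ] z n q v k j)
    (hε : ∀ i j : ℕ, 1 ≤ i → i ≤ j → j ≤ n →
      ε (z n q v i j) = if i = j then 1 else 0) :
    ∀ i j : ℕ, 1 ≤ i → i ≤ j → j ≤ n →
      (Δ (gam n N q i j • z n q v i j ^ N) =
        ∑ k ∈ Finset.Icc i j,
          (gam n N q i k • z n q v i k ^ N) ⊗ₜ[ℂ] (gam n N q k j • z n q v k j ^ N)) ∧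
      (ε (gam n N q i j • z n q v i j ^ N) = if i = j then 1 else 0) := by
  have hv₀ : v ≠ 0 := fun h ↦ hq.ne_zero (by omega) (by rw [← hv, h, zero_pow two_ne_zero])
  have hz : QuantumOrthogonal n q v (z n q v) := quantumOrthogonal_z hv₀
  let L : OB n q v →ₐ[ℂ] OB n q v ⊗[ℂ] OB n q v := Algebra.TensorProduct.includeLeft
  let R : OB n q v →ₐ[ℂ] OB n q v ⊗[ℂ] OB n q v := Algebra.TensorProduct.includeRight
  have hLR (a b : OB n q v) : L a * R b = a ⊗ₜ b := by
    simp [L, R, Algebra.TensorProduct.tmul_mul_tmul]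
  have hcomm (a b : OB n q v) : Commute (L a) (R b) := by
    simp [L, R, Commute, SemiconjBy, Algebra.TensorProduct.tmul_mul_tmul]
  have hlow (f : OB n q v →ₐ[ℂ] OB n q v ⊗[ℂ] OB n q v) (i j : ℕ) (h : j < i) :
      f (z n q v i j) = 0 := by rw [z_eq_zero_of_lt h, map_zero]
  intro i j hi hij hj
  constructor
  · have h := (hz.map (B := OB n q v ⊗[ℂ] OB n q v) L).gam_smul_sum_mul_pow (hz.map R)
      (hlow L) (hlow R) (fun _ _ _ _ ↦ hcomm _ _) hv hNodd hq hi hij hj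
    simpa only [map_smul, map_pow, hΔ i j hi hij hj, hLR, Algebra.TensorProduct.tmul_pow,
      TensorProduct.smul_tmul_smul] using h
  · rw [map_smul, map_pow, hε i j hi hij hj]
    rcases eq_or_ne i j with rfl | h
    · rw [gam_eq_one (by omega), if_pos rfl, one_pow, one_smul]
    · rw [if_neg h, zero_pow hNodd.pos.ne', smul_zero]

end SOq
end
end

section
/- Let n ≥ 1 and write k' := n+1−k for 1 ≤ k ≤ n. Let Q = (r_{ab}) be an n×n upper triangular complex matrix with all diagonal entries equal to 1, and let t₁, …, t_n ∈ ℂˣ. Set M := Q^{−1} diag(t) Q. Let 1 ≤ a < b ≤ n and assume t_b · t_{b'} = 1. Then M_{ab} M_{b'b'} = r_{ab}( M_{aa} M_{b'b'} − 1 ) − Σ_{k=a+1}^{b−1} r_{ak} M_{kb} M_{b'b'}; equivalently, M_{ab} t_{b'} = r_{ab}( t_a t_{b'} − 1 ) − Σ_{k=a+1}^{b−1} r_{ak} M_{kb} t_{b'}. -/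
noncomputable section

/-!
The relation `Q * M = diagonal t * Q` involves only upper triangular matrices. Its `(i, i)` entry
gives `M i i = t i`. Its `(a, b)` entry is a sum over `k ∈ [a, b]` whose two endpoint terms are
`Q a a * M a b` and `Q a b * t b`; after multiplication by `t c` with `t b * t c = 1`, the latter
becomes `Q a b`.
-/

open Matrix Finset

section UpperTriangularProduct

variable {ι R : Type*} [Fintype ι] [LinearOrder ι] [LocallyFiniteOrder ι]
  [NonUnitalNonAssocSemiring R] {A B : Matrix ι ι R}

theorem mul_apply_eq_sum_Icc_of_isUpperTriangular (hA : A.IsUpperTriangular)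
    (hB : B.IsUpperTriangular) (i j : ι) :
    (A * B) i j = ∑ k ∈ Icc i j, A i k * B k j := by
  rw [mul_apply]
  refine (sum_subset (subset_univ _) fun k _ hk ↦ ?_).symm
  rw [mem_Icc, not_and_or, not_le, not_le] at hk
  rcases hk with hki | hjk
  · rw [hA hki, zero_mul]
  · rw [hB hjk, mul_zero]

theorem mul_apply_self_of_isUpperTriangular (hA : A.IsUpperTriangular)
    (hB : B.IsUpperTriangular) (i : ι) : (A * B) i i = A i i * B i i := by
  rw [mul_apply_eq_sum_Icc_of_isUpperTriangular hA hB, Icc_self, sum_singleton]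

theorem mul_apply_of_isUpperTriangular_of_lt (hA : A.IsUpperTriangular)
    (hB : B.IsUpperTriangular) {i j : ι} (hij : i < j) :
    (A * B) i j = A i i * B i j + (A i j * B j j + ∑ k ∈ Ioo i j, A i k * B k j) := by
  rw [mul_apply_eq_sum_Icc_of_isUpperTriangular hA hB, ← add_sum_Ioc_eq_sum_Icc hij.le,
    ← add_sum_Ioo_eq_sum_Ioc hij]

end UpperTriangularProduct

section DiagonalConjugate

variable {ι R : Type*} [Fintype ι] [DecidableEq ι] [CommRing R]
  {Q : Matrix ι ι R} (t : ι → R)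

theorem mul_conj_diagonal (hQdet : IsUnit Q.det) :
    Q * (Q⁻¹ * diagonal t * Q) = diagonal t * Q := by
  rw [Matrix.mul_assoc, mul_nonsing_inv_cancel_left _ _ hQdet]

variable [LinearOrder ι]

theorem isUnit_det_iff_of_isUpperTriangular (hQ : Q.IsUpperTriangular) :
    IsUnit Q.det ↔ ∀ i, IsUnit (Q i i) := by
  rw [det_of_isUpperTriangular hQ, IsUnit.prod_univ_iff]

theorem isUpperTriangular_conj_diagonal (hQ : Q.IsUpperTriangular) (hQdet : IsUnit Q.det) :
    (Q⁻¹ * diagonal t * Q).IsUpperTriangular := by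
  have : Invertible Q := Q.invertibleOfIsUnitDet hQdet
  exact ((blockTriangular_inv_of_blockTriangular hQ).mul (blockTriangular_diagonal t)).mul hQ

variable [LocallyFiniteOrder ι]

theorem conj_diagonal_apply_self (hQ : Q.IsUpperTriangular) (hQdet : IsUnit Q.det) (i : ι) :
    (Q⁻¹ * diagonal t * Q) i i = t i := by
  have hQi : IsUnit (Q i i) := (isUnit_det_iff_of_isUpperTriangular hQ).1 hQdet i
  apply hQi.mul_left_cancel
  rw [← mul_apply_self_of_isUpperTriangular hQ (isUpperTriangular_conj_diagonal t hQ hQdet),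
    mul_conj_diagonal t hQdet, diagonal_mul, mul_comm]

theorem conj_diagonal_row_recursion (hQ : Q.IsUpperTriangular) (hQdet : IsUnit Q.det) {a b : ι}
    (hab : a < b) :
    Q a a * (Q⁻¹ * diagonal t * Q) a b =
      Q a b * (t a - t b) - ∑ k ∈ Ioo a b, Q a k * (Q⁻¹ * diagonal t * Q) k b := by
  have hentry := mul_apply_of_isUpperTriangular_of_lt hQ
    (isUpperTriangular_conj_diagonal t hQ hQdet) hab
  rw [mul_conj_diagonal t hQdet, diagonal_mul, conj_diagonal_apply_self t hQ hQdet] at hentry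
  linear_combination -hentry

variable {t}

theorem torus_conjugation_identity_general {M : Matrix ι ι R}
    (hQ : Q.IsUpperTriangular) (hQdet : IsUnit Q.det) (hM : M = Q⁻¹ * diagonal t * Q)
    {a b c : ι} (hab : a < b) (htbc : t b * t c = 1) :
    (Q a a * (M a b * M c c) =
      Q a b * (M a a * M c c - 1) - ∑ k ∈ Ioo a b, Q a k * (M k b * M c c)) ∧
    (Q a a * (M a b * t c) =
      Q a b * (t a * t c - 1) - ∑ k ∈ Ioo a b, Q a k * (M k b * t c)) := by
  have hdiag (i : ι) : M i i = t i := hM ▸ conj_diagonal_apply_self t hQ hQdet i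
  have hrow : Q a a * M a b = Q a b * (t a - t b) - ∑ k ∈ Ioo a b, Q a k * M k b :=
    hM ▸ conj_diagonal_row_recursion t hQ hQdet hab
  rw [hdiag, hdiag, and_self]
  simp only [← mul_assoc, ← sum_mul]
  linear_combination t c * hrow - Q a b * htbc

end DiagonalConjugate

/-- Let `Q` be unipotent upper triangular over `ℂ`, `t` a vector of
nonzero scalars with `t_b t_{b'} = 1` (where `b' = n+1-b`, i.e. `Fin.rev b` in 0-based
indexing), and `M = Q⁻¹ diag(t) Q`. Then for `a < b`,
`M_{ab} M_{b'b'} = Q_{ab}(M_{aa} M_{b'b'} - 1) - ∑_{k=a+1}^{b-1} Q_{ak} M_{kb} M_{b'b'}`;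
equivalently `M_{ab} t_{b'} = Q_{ab}(t_a t_{b'} - 1) - ∑_{k=a+1}^{b-1} Q_{ak} M_{kb} t_{b'}`. -/
theorem torus_conjugation_identity (n : ℕ) (hn : 1 ≤ n)
    (Q : Matrix (Fin n) (Fin n) ℂ)
    (hQdiag : ∀ a, Q a a = 1)
    (hQlower : ∀ a b : Fin n, b < a → Q a b = 0)
    (t : Fin n → ℂ) (ht : ∀ k, t k ≠ 0)
    (M : Matrix (Fin n) (Fin n) ℂ)
    (hM : M = Q⁻¹ * Matrix.diagonal t * Q)
    (a b : Fin n) (hab : a < b) (htb : t b * t (Fin.rev b) = 1) :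
    (M a b * M (Fin.rev b) (Fin.rev b) =
      Q a b * (M a a * M (Fin.rev b) (Fin.rev b) - 1) -
        ∑ k ∈ Finset.Ioo a b, Q a k * (M k b * M (Fin.rev b) (Fin.rev b))) ∧
    (M a b * t (Fin.rev b) =
      Q a b * (t a * t (Fin.rev b) - 1) -
        ∑ k ∈ Finset.Ioo a b, Q a k * (M k b * t (Fin.rev b))) := by
  have hQ : Q.IsUpperTriangular := fun i j hji ↦ hQlower i j hji
  have hQdet : IsUnit Q.det := (isUnit_det_iff_of_isUpperTriangular hQ).2 (by simp [hQdiag])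
  simpa only [hQdiag, one_mul] using torus_conjugation_identity_general hQ hQdet hM hab htb
end
end
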